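/- For any A ⊂ X, capa_1(I_A ∪ ∂*A) ≤ capa_1(A), where I_A is the measure-theoretic interior of A and ∂*A is the measure-theoretic boundary of A. -/

import Mathlib

open MeasureTheory Filter Metric Set
open scoped Topology ENNReal NNReal symmDiff

noncomputable section

namespace PaperBV

/-- A rectifiable curve parametrized by arc-length: a `1`-Lipschitz map on `[0, len]`. -/
structure Curve (X : Type*) [MetricSpace X] where
  len : ℝ
  len_nonneg : 0 ≤ len
  toFun : ℝ → X
  lip : LipschitzOnWith 1 toFun (Set.Icc 0 len)

variable {X : Type*} [MetricSpace X] [MeasurableSpace X] [BorelSpace X]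

/-- The curve lies in the set `A`. -/
def Curve.In (γ : Curve X) (A : Set X) : Prop :=
  ∀ t ∈ Set.Icc (0 : ℝ) γ.len, γ.toFun t ∈ A

/-- The curve integral `∫_γ g ds` of a nonnegative function, for an
arc-length parametrized curve. -/
def Curve.integral (γ : Curve X) (g : X → ℝ≥0∞) : ℝ≥0∞ :=
  ∫⁻ t in Set.Icc (0 : ℝ) γ.len, g (γ.toFun t)

/-- The upper gradient inequality `|u(x) - u(y)| ≤ ∫_γ g ds` along the curve `γ`,
where `x, y` are the endpoints of `γ`. -/
def UGIneq (u : X → ℝ) (g : X → ℝ≥0∞) (γ : Curve X) : Prop :=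
  ENNReal.ofReal |u (γ.toFun 0) - u (γ.toFun γ.len)| ≤ γ.integral g

/-- `g` is an upper gradient of `u` on `X`: `g` is nonnegative (automatic in `ℝ≥0∞`),
Borel, and the upper gradient inequality holds along every curve. -/
def IsUpperGradient (u : X → ℝ) (g : X → ℝ≥0∞) : Prop :=
  Measurable g ∧ ∀ γ : Curve X, UGIneq u g γ

/-- A family of curves has zero `1`-modulus: there is a nonnegative Borel function
`ρ ∈ L¹(X)` whose curve integral is infinite along every curve of the family. -/
def ZeroMod (μ : Measure X) (Γ : Set (Curve X)) : Prop :=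
  ∃ ρ : X → ℝ≥0∞, Measurable ρ ∧ (∫⁻ x, ρ x ∂μ) < ∞ ∧ ∀ γ ∈ Γ, γ.integral ρ = ∞

/-- `g` is a `1`-weak upper gradient of `u` in `A`: `g` is nonnegative, `μ`-measurable,
and the upper gradient inequality holds along `1`-a.e. curve in `A`. -/
def IsWeakUpperGradientOn (μ : Measure X) (u : X → ℝ) (g : X → ℝ≥0∞) (A : Set X) : Prop :=
  AEMeasurable g μ ∧ ZeroMod μ {γ : Curve X | γ.In A ∧ ¬ UGIneq u g γ}

/-- A nonnegative function `g` belongs to `L¹_loc(A)`. -/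
def LIntegrableLocOn (μ : Measure X) (g : X → ℝ≥0∞) (A : Set X) : Prop :=
  ∀ x ∈ A, ∃ r > (0 : ℝ), (∫⁻ y in A ∩ Metric.ball x r, g y ∂μ) < ∞

/-- `g` is the minimal `1`-weak upper gradient of `u` in `A`: a `1`-weak upper gradient
satisfying `g ≤ g'` `μ`-a.e. in `A` for every `1`-weak upper gradient `g' ∈ L¹_loc(A)`. -/
def IsMinimalWUG (μ : Measure X) (u : X → ℝ) (g : X → ℝ≥0∞) (A : Set X) : Prop :=
  IsWeakUpperGradientOn μ u g A ∧
    ∀ g' : X → ℝ≥0∞, IsWeakUpperGradientOn μ u g' A → LIntegrableLocOn μ g' A →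
      ∀ᵐ x ∂(μ.restrict A), g x ≤ g' x

/-- The Newtonian norm `‖u‖_{N^{1,1}(A)}` (valued in `ℝ≥0∞`). -/
def NNorm (μ : Measure X) (A : Set X) (u : X → ℝ) : ℝ≥0∞ :=
  (∫⁻ x in A, ENNReal.ofReal |u x| ∂μ) +
    ⨅ (g : X → ℝ≥0∞) (_ : IsWeakUpperGradientOn μ u g A), ∫⁻ x in A, g x ∂μ

/-- `u ∈ N^{1,1}(A)`. -/
def MemN11 (μ : Measure X) (A : Set X) (u : X → ℝ) : Prop :=
  NNorm μ A u < ∞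

/-- `u ∈ N^{1,1}_loc(A)`: every point of `A` has a ball `B` with `u ∈ N^{1,1}(A ∩ B)`. -/
def MemN11Loc (μ : Measure X) (A : Set X) (u : X → ℝ) : Prop :=
  ∀ x ∈ A, ∃ r > (0 : ℝ), NNorm μ (A ∩ Metric.ball x r) u < ∞

/-- `u ∈ N^{1,1}(Ω')` for every bounded open `Ω' ⊆ X`. -/
def MemN11LocBounded (μ : Measure X) (u : X → ℝ) : Prop :=
  ∀ Ω' : Set X, IsOpen Ω' → Bornology.IsBounded Ω' → NNorm μ Ω' u < ∞

/-- `u ∈ N^{1,1}_0(Ω)`: `u ∈ N^{1,1}(X)` and `u = 0` outside `Ω`. -/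
def MemN110 (μ : Measure X) (Ω : Set X) (u : X → ℝ) : Prop :=
  MemN11 μ Set.univ u ∧ ∀ x ∉ Ω, u x = 0

/-- The `1`-capacity `capa₁(A) = inf {‖u‖_{N^{1,1}(X)} : u ∈ N^{1,1}(X), u ≥ 1 on A}`. -/
def capa1 (μ : Measure X) (A : Set X) : ℝ≥0∞ :=
  ⨅ (u : X → ℝ) (_ : MemN11 μ Set.univ u) (_ : ∀ x ∈ A, 1 ≤ u x), NNorm μ Set.univ u

/-- `U` is `1`-quasiopen: for every `ε > 0` there is an open `G` with `capa₁(G) < ε`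
such that `U ∪ G` is open. -/
def QuasiOpen (μ : Measure X) (U : Set X) : Prop :=
  ∀ ε : ℝ, 0 < ε → ∃ G : Set X, IsOpen G ∧ capa1 μ G < ENNReal.ofReal ε ∧ IsOpen (U ∪ G)

/-- `u ∈ L¹_loc(A)`. -/
def MemL1Loc (μ : Measure X) (A : Set X) (u : X → ℝ) : Prop :=
  AEMeasurable u (μ.restrict A) ∧
    ∀ x ∈ A, ∃ r > (0 : ℝ), (∫⁻ y in A ∩ Metric.ball x r, ENNReal.ofReal |u y| ∂μ) < ∞

/-- `v i → u` in `L¹_loc(A)`: every `x ∈ A` has a ball `B` with `v i → u` in `L¹(A ∩ B)`. -/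
def L1LocConv (μ : Measure X) (A : Set X) (v : ℕ → X → ℝ) (u : X → ℝ) : Prop :=
  ∀ x ∈ A, ∃ r > (0 : ℝ),
    Filter.Tendsto (fun i => ∫⁻ y in A ∩ Metric.ball x r, ENNReal.ofReal |v i y - u y| ∂μ)
      Filter.atTop (𝓝 0)

/-- `u` is locally Lipschitz on `Ω`. -/
def LocLipOn (u : X → ℝ) (Ω : Set X) : Prop :=
  ∀ x ∈ Ω, ∃ r > (0 : ℝ), ∃ K : ℝ≥0, LipschitzOnWith K u (Ω ∩ Metric.ball x r)

/-- The total variation `‖Du‖(Ω)` of `u` in an open set `Ω`: the infimum of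
`liminf_i ∫_Ω g_{v i} dμ` over sequences of locally Lipschitz functions `v i → u`
in `L¹_loc(Ω)`, where `g_{v i}` is the minimal `1`-weak upper gradient of `v i` in `Ω`. -/
def tvOpen (μ : Measure X) (Ω : Set X) (u : X → ℝ) : ℝ≥0∞ :=
  ⨅ (v : ℕ → X → ℝ) (g : ℕ → X → ℝ≥0∞) (_ : ∀ i, LocLipOn (v i) Ω)
    (_ : ∀ i, IsMinimalWUG μ (v i) (g i) Ω) (_ : L1LocConv μ Ω v u),
    Filter.liminf (fun i => ∫⁻ x in Ω, g i x ∂μ) Filter.atTop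

/-- The total variation `‖Du‖(A)` of `u` in an arbitrary set `A`:
`inf {‖Du‖(Ω) : Ω ⊇ A open}`. -/
def tv (μ : Measure X) (A : Set X) (u : X → ℝ) : ℝ≥0∞ :=
  ⨅ (Ω : Set X) (_ : IsOpen Ω) (_ : A ⊆ Ω), tvOpen μ Ω u

/-- The perimeter `P(E, A) = ‖Dχ_E‖(A)` for arbitrary `A`. -/
def perim (μ : Measure X) (E A : Set X) : ℝ≥0∞ :=
  tv μ A (Set.indicator E (fun _ => (1 : ℝ)))

/-- The perimeter `P(E, Ω) = ‖Dχ_E‖(Ω)` for open `Ω`. -/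
def perimOpen (μ : Measure X) (E Ω : Set X) : ℝ≥0∞ :=
  tvOpen μ Ω (Set.indicator E (fun _ => (1 : ℝ)))

/-- The measure `μ` is doubling with constant `Cd`. -/
def Doubling (μ : Measure X) (Cd : ℝ) : Prop :=
  1 ≤ Cd ∧ ∀ (x : X) (r : ℝ), 0 < r →
    0 < μ (Metric.ball x (2 * r)) ∧
      μ (Metric.ball x (2 * r)) ≤ ENNReal.ofReal Cd * μ (Metric.ball x r) ∧
      μ (Metric.ball x r) < ∞

/-- The space supports a `(1,1)`-Poincaré inequality with constants `CP, lam`. -/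
def Poincare (μ : Measure X) (CP lam : ℝ) : Prop :=
  1 ≤ CP ∧ 1 ≤ lam ∧ ∀ (x : X) (r : ℝ), 0 < r → ∀ (u : X → ℝ) (g : X → ℝ≥0∞),
    MemL1Loc μ Set.univ u → IsUpperGradient u g →
      ENNReal.ofReal (⨍ y in Metric.ball x r, |u y - ⨍ z in Metric.ball x r, u z ∂μ| ∂μ)
        ≤ ENNReal.ofReal (CP * r) *
            ((∫⁻ y in Metric.ball x (lam * r), g y ∂μ) / μ (Metric.ball x (lam * r)))

/-- The restricted spherical Hausdorff content of codimension one. -/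
def HR (μ : Measure X) (R : ℝ) (A : Set X) : ℝ≥0∞ :=
  ⨅ (c : ℕ → X) (r : ℕ → ℝ) (_ : ∀ i, 0 < r i ∧ r i ≤ R)
    (_ : A ⊆ ⋃ i, Metric.ball (c i) (r i)),
    ∑' i, μ (Metric.ball (c i) (r i)) / ENNReal.ofReal (r i)

/-- The codimension-one Hausdorff measure `H(A) = lim_{R → 0} H_R(A)`. -/
def Hcodim (μ : Measure X) (A : Set X) : ℝ≥0∞ :=
  ⨆ (R : ℝ) (_ : 0 < R), HR μ R A

/-- The lower approximate limit `u^∧`. -/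
def lowerApprox (μ : Measure X) (u : X → ℝ) (x : X) : EReal :=
  sSup ((fun t : ℝ => (t : EReal)) ''
    {t : ℝ | Filter.Tendsto
      (fun r => μ (Metric.ball x r ∩ {y | u y < t}) / μ (Metric.ball x r))
      (𝓝[>] (0 : ℝ)) (𝓝 0)})

/-- The upper approximate limit `u^∨`. -/
def upperApprox (μ : Measure X) (u : X → ℝ) (x : X) : EReal :=
  sInf ((fun t : ℝ => (t : EReal)) ''
    {t : ℝ | Filter.Tendsto
      (fun r => μ (Metric.ball x r ∩ {y | t < u y}) / μ (Metric.ball x r))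
      (𝓝[>] (0 : ℝ)) (𝓝 0)})

/-- `u ∈ BV_loc(X)`: `u ∈ L¹_loc(X)` with `‖Du‖(Ω') < ∞` for every bounded open `Ω'`. -/
def MemBVLoc (μ : Measure X) (u : X → ℝ) : Prop :=
  MemL1Loc μ Set.univ u ∧
    ∀ Ω' : Set X, IsOpen Ω' → Bornology.IsBounded Ω' → tvOpen μ Ω' u < ∞

/-- The measure-theoretic interior `I_E`. -/
def mInterior (μ : Measure X) (E : Set X) : Set X :=
  {x | Filter.Tendsto (fun r => μ (Metric.ball x r \ E) / μ (Metric.ball x r))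
    (𝓝[>] (0 : ℝ)) (𝓝 0)}

/-- The measure-theoretic exterior `O_E`. -/
def mExterior (μ : Measure X) (E : Set X) : Set X :=
  {x | Filter.Tendsto (fun r => μ (Metric.ball x r ∩ E) / μ (Metric.ball x r))
    (𝓝[>] (0 : ℝ)) (𝓝 0)}

/-- The measure-theoretic boundary `∂*E`: the points where both `E` and its complement
have positive upper density. -/
def mBoundary (μ : Measure X) (E : Set X) : Set X :=
  {x | 0 < Filter.limsup (fun r => μ (Metric.ball x r ∩ E) / μ (Metric.ball x r))
        (𝓝[>] (0 : ℝ)) ∧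
       0 < Filter.limsup (fun r => μ (Metric.ball x r \ E) / μ (Metric.ball x r))
        (𝓝[>] (0 : ℝ))}


set_option linter.unusedSectionVars false
set_option linter.unusedVariables false

set_option linter.unusedSectionVars false
set_option linter.unusedVariables false

theorem Curve.dist_le (γ : Curve X) {s t : ℝ} (hs : s ∈ Icc 0 γ.len) (ht : t ∈ Icc 0 γ.len) :
    dist (γ.toFun s) (γ.toFun t) ≤ |s - t| := by
  have := γ.lip.dist_le_mul s hs t ht
  simpa [Real.dist_eq] using this

theorem Curve.continuousOn (γ : Curve X) : ContinuousOn γ.toFun (Icc 0 γ.len) :=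
  γ.lip.continuousOn

theorem Curve.aemeasurable (γ : Curve X) :
    AEMeasurable γ.toFun (volume.restrict (Icc 0 γ.len)) :=
  γ.continuousOn.aemeasurable measurableSet_Icc

theorem Curve.aemeasurable_comp (γ : Curve X) {g : X → ℝ≥0∞} (hg : Measurable g) {a b : ℝ}
    (ha : 0 ≤ a) (hb : b ≤ γ.len) :
    AEMeasurable (fun t => g (γ.toFun t)) (volume.restrict (Ioc a b)) := by
  refine (hg.comp_aemeasurable γ.aemeasurable).mono_measure (Measure.restrict_mono ?_ le_rfl)
  intro t ht
  exact ⟨ha.trans ht.1.le, ht.2.trans hb⟩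

theorem Curve.integral_eq (γ : Curve X) (g : X → ℝ≥0∞) :
    γ.integral g = ∫⁻ t in Ioc 0 γ.len, g (γ.toFun t) := by
  unfold Curve.integral
  exact setLIntegral_congr Ioc_ae_eq_Icc.symm

/-- subcurve -/
def Curve.sub (γ : Curve X) (a b : ℝ) (ha : 0 ≤ a) (hab : a ≤ b) (hb : b ≤ γ.len) : Curve X where
  len := b - a
  len_nonneg := by linarith
  toFun := fun t => γ.toFun (a + t)
  lip := by
    refine LipschitzOnWith.of_dist_le_mul fun s hs t ht => ?_
    have := γ.dist_le (s := a + s) (t := a + t) ⟨by linarith [hs.1], by linarith [hs.2]⟩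
      ⟨by linarith [ht.1], by linarith [ht.2]⟩
    simpa [Real.dist_eq] using this

theorem IsUpperGradient.sub_le {u : X → ℝ} {g : X → ℝ≥0∞} (h : IsUpperGradient u g) (γ : Curve X)
    {a b : ℝ} (ha : 0 ≤ a) (hab : a ≤ b) (hb : b ≤ γ.len) :
    ENNReal.ofReal |u (γ.toFun a) - u (γ.toFun b)| ≤ ∫⁻ t in Ioc a b, g (γ.toFun t) := by
  have h1 := h.2 (γ.sub a b ha hab hb)
  unfold UGIneq at h1
  rw [Curve.integral_eq] at h1
  have e : ∫⁻ t in Ioc 0 (b - a), g (γ.toFun (a + t)) = ∫⁻ t in Ioc a b, g (γ.toFun t) := by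
    have := (measurePreserving_add_left (volume : Measure ℝ) a).setLIntegral_comp_preimage_emb
      (MeasurableEquiv.addLeft a).measurableEmbedding (fun t => g (γ.toFun t)) (Ioc a b)
    rw [← this]
    congr 2
    ext t; simp only [mem_Ioc, mem_preimage]
    constructor <;> rintro ⟨h1, h2⟩ <;> constructor <;> linarith
  simp only [Curve.sub, add_zero, add_sub_cancel] at h1
  rwa [e] at h1

theorem ug_of_forall {u : X → ℝ} {g : X → ℝ≥0∞} (hg : Measurable g)
    (h : ∀ γ : Curve X, ENNReal.ofReal |u (γ.toFun 0) - u (γ.toFun γ.len)| ≤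
      ∫⁻ t in Ioc 0 γ.len, g (γ.toFun t)) : IsUpperGradient u g :=
  ⟨hg, fun γ => by unfold UGIneq; rw [Curve.integral_eq]; exact h γ⟩

theorem IsUpperGradient.le {u : X → ℝ} {g : X → ℝ≥0∞} (h : IsUpperGradient u g) (γ : Curve X) :
    ENNReal.ofReal |u (γ.toFun 0) - u (γ.toFun γ.len)| ≤ ∫⁻ t in Ioc 0 γ.len, g (γ.toFun t) :=
  h.sub_le γ le_rfl γ.len_nonneg le_rfl

theorem IsUpperGradient.mono {u : X → ℝ} {g g' : X → ℝ≥0∞} (h : IsUpperGradient u g)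
    (hg' : Measurable g') (hle : ∀ x, g x ≤ g' x) : IsUpperGradient u g' :=
  ug_of_forall hg' fun γ => (h.le γ).trans (lintegral_mono fun t => hle _)

/-- post-composition with a Lipschitz function -/
theorem IsUpperGradient.comp {u : X → ℝ} {g : X → ℝ≥0∞} (h : IsUpperGradient u g) {φ : ℝ → ℝ}
    {K : ℝ} (hK : 0 ≤ K) (hφ : ∀ a b, |φ a - φ b| ≤ K * |a - b|) :
    IsUpperGradient (fun x => φ (u x)) (fun x => ENNReal.ofReal K * g x) := by
  refine ug_of_forall (h.1.const_mul _) fun γ => ?_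
  rw [lintegral_const_mul' _ _ ENNReal.ofReal_ne_top]
  calc _ ≤ ENNReal.ofReal (K * |u (γ.toFun 0) - u (γ.toFun γ.len)|) :=
        ENNReal.ofReal_le_ofReal (hφ _ _)
    _ ≤ _ := by
        rw [ENNReal.ofReal_mul hK]
        gcongr
        exact h.le γ

theorem IsUpperGradient.abs {u : X → ℝ} {g : X → ℝ≥0∞} (h : IsUpperGradient u g) :
    IsUpperGradient (fun x => |u x|) g := by
  have := h.comp (φ := fun a => |a|) zero_le_one (fun a b => by
    rw [one_mul]; exact abs_abs_sub_abs_le a b)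
  simpa using this

theorem IsUpperGradient.sub {u v : X → ℝ} {g g' : X → ℝ≥0∞} (h : IsUpperGradient u g)
    (h' : IsUpperGradient v g') :
    IsUpperGradient (fun x => u x - v x) (fun x => g x + g' x) := by
  refine ug_of_forall (h.1.add h'.1) fun γ => ?_
  rw [lintegral_add_left' (γ.aemeasurable_comp h.1 le_rfl le_rfl)]
  refine le_trans ?_ (add_le_add (h.le γ) (h'.le γ))
  rw [← ENNReal.ofReal_add (abs_nonneg _) (abs_nonneg _)]
  apply ENNReal.ofReal_le_ofReal
  calc |u (γ.toFun 0) - v (γ.toFun 0) - (u (γ.toFun γ.len) - v (γ.toFun γ.len))|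
      = |(u (γ.toFun 0) - u (γ.toFun γ.len)) - (v (γ.toFun 0) - v (γ.toFun γ.len))| := by ring_nf
    _ ≤ _ := abs_sub _ _

theorem ug_iSup {ι : Type*} [Countable ι] {ψ : ι → X → ℝ} {g : ι → X → ℝ≥0∞}
    (h01 : ∀ i x, 0 ≤ ψ i x ∧ ψ i x ≤ 1) (h : ∀ i, IsUpperGradient (ψ i) (g i)) :
    IsUpperGradient (fun x => ⨆ i, ψ i x) (fun x => ∑' i, g i x) := by
  refine ug_of_forall (Measurable.tsum fun i => (h i).1) fun γ => ?_
  rcases isEmpty_or_nonempty ι with he | hne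
  · simp
  have bdd : ∀ x, BddAbove (range fun i => ψ i x) := fun x => ⟨1, by rintro _ ⟨i, rfl⟩; exact (h01 i x).2⟩
  by_contra hcon
  push Not at hcon
  set I := ∫⁻ t in Ioc 0 γ.len, ∑' i, g i (γ.toFun t) with hI
  have hItop : I ≠ ∞ := ne_top_of_lt hcon
  have key : ∀ i, |ψ i (γ.toFun 0) - ψ i (γ.toFun γ.len)| ≤ I.toReal := by
    intro i
    rw [← ENNReal.ofReal_le_iff_le_toReal hItop]
    refine ((h i).le γ).trans (lintegral_mono fun t => ENNReal.le_tsum i)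
  have : |(⨆ i, ψ i (γ.toFun 0)) - ⨆ i, ψ i (γ.toFun γ.len)| ≤ I.toReal := by
    rw [abs_sub_le_iff]
    constructor
    · rw [sub_le_iff_le_add]
      refine ciSup_le fun i => ?_
      have := (abs_sub_le_iff.1 (key i)).1
      have h2 : ψ i (γ.toFun γ.len) ≤ _ := le_ciSup (bdd (γ.toFun γ.len)) i
      linarith
    · rw [sub_le_iff_le_add]
      refine ciSup_le fun i => ?_
      have := (abs_sub_le_iff.1 (key i)).2
      have h2 : ψ i (γ.toFun 0) ≤ _ := le_ciSup (bdd (γ.toFun 0)) i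
      linarith
  rw [← ENNReal.ofReal_le_iff_le_toReal hItop] at this
  exact absurd this (not_le.2 hcon)

theorem lint_Ioc_add {f : ℝ → ℝ≥0∞} {a b c : ℝ} (hab : a ≤ b) (hbc : b ≤ c) :
    ∫⁻ t in Ioc a c, f t = (∫⁻ t in Ioc a b, f t) + ∫⁻ t in Ioc b c, f t := by
  rw [← Ioc_union_Ioc_eq_Ioc hab hbc, lintegral_union measurableSet_Ioc]
  rw [Set.disjoint_left]
  intro t h1 h2
  exact absurd h1.2 (not_le.2 h2.1)

/-- averaging: if `D * (b-a) ≤ (b-a) * F t` for each t then `D ≤ ∫ F`. -/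
theorem avg_le {F : ℝ → ℝ≥0∞} {a b : ℝ} (hab : a < b) {D : ℝ≥0∞}
    (h : ∀ t ∈ Ioc a b, D ≤ F t * ENNReal.ofReal (b - a)) : D ≤ ∫⁻ t in Ioc a b, F t := by
  have h1 : ∫⁻ t in Ioc a b, D ≤ ∫⁻ t in Ioc a b, F t * ENNReal.ofReal (b - a) :=
    setLIntegral_mono' measurableSet_Ioc h
  rw [lintegral_const, lintegral_mul_const' _ _ ENNReal.ofReal_ne_top, Measure.restrict_apply_univ,
    Real.volume_Ioc] at h1
  have h0 : ENNReal.ofReal (b - a) ≠ 0 := by simpa using hab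
  exact (ENNReal.mul_le_mul_iff_left h0 ENNReal.ofReal_ne_top).1 h1

theorem ug_of_slope {f : X → ℝ} {G : X → ℝ≥0∞} (hG : Measurable G) {η : ℝ} (hη : 0 < η)
    (h : ∀ x x', dist x x' ≤ η → ENNReal.ofReal |f x - f x'| ≤ G x * ENNReal.ofReal (dist x x')) :
    IsUpperGradient f G := by
  refine ug_of_forall hG fun γ => ?_
  have short : ∀ a b, 0 ≤ a → a ≤ b → b ≤ γ.len → b - a ≤ η →
      ENNReal.ofReal |f (γ.toFun a) - f (γ.toFun b)| ≤ ∫⁻ t in Ioc a b, G (γ.toFun t) := by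
    intro a b ha hab hb hη'
    rcases hab.eq_or_lt with rfl | hlt
    · simp
    refine avg_le hlt fun t ht => ?_
    have d1 := γ.dist_le (s := t) (t := a) ⟨by linarith [ht.1], by linarith [ht.2]⟩ ⟨ha, by linarith⟩
    have d2 := γ.dist_le (s := t) (t := b) ⟨by linarith [ht.1], by linarith [ht.2]⟩ ⟨by linarith, hb⟩
    rw [abs_of_nonneg (by linarith [ht.1])] at d1
    rw [abs_of_nonpos (by linarith [ht.2])] at d2
    have e1 := h (γ.toFun t) (γ.toFun a) (by linarith [ht.2])
    have e2 := h (γ.toFun t) (γ.toFun b) (by linarith [ht.1])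
    calc ENNReal.ofReal |f (γ.toFun a) - f (γ.toFun b)|
        ≤ ENNReal.ofReal (|f (γ.toFun t) - f (γ.toFun a)| + |f (γ.toFun t) - f (γ.toFun b)|) := by
          apply ENNReal.ofReal_le_ofReal
          rw [abs_sub_comm (f (γ.toFun t)) (f (γ.toFun a))]
          exact abs_sub_le _ _ _
      _ ≤ G (γ.toFun t) * ENNReal.ofReal (t - a) + G (γ.toFun t) * ENNReal.ofReal (b - t) := by
          rw [ENNReal.ofReal_add (abs_nonneg _) (abs_nonneg _)]
          refine add_le_add (e1.trans ?_) (e2.trans ?_)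
          · gcongr
          · gcongr; linarith
      _ = G (γ.toFun t) * ENNReal.ofReal (b - a) := by
          rw [← mul_add, ← ENNReal.ofReal_add (by linarith [ht.1]) (by linarith [ht.2])]
          congr 2; ring
  have main : ∀ n : ℕ, ∀ b, 0 ≤ b → b ≤ γ.len → b ≤ n * η →
      ENNReal.ofReal |f (γ.toFun 0) - f (γ.toFun b)| ≤ ∫⁻ t in Ioc 0 b, G (γ.toFun t) := by
    intro n
    induction n with
    | zero =>
      intro b hb _ hb'
      have : b = 0 := by simp at hb'; linarith
      subst this; simp
    | succ n ih =>
      intro b hb hbl hb'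
      push_cast at hb'
      set c := max 0 (b - η) with hc
      have hc0 : 0 ≤ c := le_max_left _ _
      have hcb : c ≤ b := max_le hb (by linarith)
      have hbc : b - c ≤ η := by have := le_max_right 0 (b - η); linarith
      have hcn : c ≤ n * η := max_le (by positivity) (by linarith)
      rw [lint_Ioc_add hc0 hcb]
      refine le_trans ?_ (add_le_add (ih c hc0 (hcb.trans hbl) hcn) (short c b hc0 hcb hbl hbc))
      rw [← ENNReal.ofReal_add (abs_nonneg _) (abs_nonneg _)]
      exact ENNReal.ofReal_le_ofReal (abs_sub_le _ _ _)
  obtain ⟨n, hn⟩ := exists_nat_ge (γ.len / η)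
  exact main n γ.len γ.len_nonneg le_rfl (by rwa [div_le_iff₀ hη] at hn)

/-- product with a Lipschitz cutoff -/
theorem ug_mul {η h : X → ℝ} {g H : X → ℝ≥0∞} {K : ℝ} (hK : 0 ≤ K) (hη1 : ∀ x, |η x| ≤ 1)
    (hηK : ∀ x y, |η x - η y| ≤ K * dist x y) (hg : IsUpperGradient h g) (hH : Measurable H)
    (hH' : ∀ x, ENNReal.ofReal |h x| ≤ H x) :
    IsUpperGradient (fun x => η x * h x) (fun x => g x + ENNReal.ofReal K * H x) := by
  refine ug_of_forall (hg.1.add (hH.const_mul _)) fun γ => ?_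
  rw [lintegral_add_left' (γ.aemeasurable_comp hg.1 le_rfl le_rfl)]
  rcases γ.len_nonneg.eq_or_lt with h0 | hlt
  · rw [← h0]; simp
  rw [← tsub_le_iff_left]
  refine avg_le hlt fun t ht => ?_
  rw [tsub_le_iff_left]
  have ht0 : 0 ≤ t := ht.1.le
  have d1 := γ.dist_le (s := 0) (t := t) ⟨le_rfl, hlt.le⟩ ⟨ht0, ht.2⟩
  have d2 := γ.dist_le (s := γ.len) (t := t) ⟨hlt.le, le_rfl⟩ ⟨ht0, ht.2⟩
  rw [abs_of_nonpos (by linarith)] at d1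
  rw [abs_of_nonneg (by linarith [ht.2])] at d2
  set p := γ.toFun 0
  set q := γ.toFun γ.len
  set z := γ.toFun t
  have e1 : |η p * h p - η z * h z| ≤ |h p - h z| + K * t * |h z| := by
    have : η p * h p - η z * h z = η p * (h p - h z) + (η p - η z) * h z := by ring
    rw [this]
    refine (abs_add_le _ _).trans ?_
    rw [abs_mul, abs_mul]
    refine add_le_add (by nlinarith [hη1 p, abs_nonneg (h p - h z)]) ?_
    refine mul_le_mul_of_nonneg_right ((hηK p z).trans ?_) (abs_nonneg _)
    exact mul_le_mul_of_nonneg_left (by linarith) hK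
  have e2 : |η z * h z - η q * h q| ≤ |h z - h q| + K * (γ.len - t) * |h z| := by
    have : η z * h z - η q * h q = η q * (h z - h q) + (η z - η q) * h z := by ring
    rw [this]
    refine (abs_add_le _ _).trans ?_
    rw [abs_mul, abs_mul]
    refine add_le_add (by nlinarith [hη1 q, abs_nonneg (h z - h q)]) ?_
    refine mul_le_mul_of_nonneg_right ((hηK z q).trans ?_) (abs_nonneg _)
    rw [dist_comm]
    exact mul_le_mul_of_nonneg_left (by linarith) hK
  calc ENNReal.ofReal |η p * h p - η q * h q|
      ≤ ENNReal.ofReal (|h p - h z| + |h z - h q| + K * |h z| * γ.len) := by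
        apply ENNReal.ofReal_le_ofReal
        have := abs_sub_le (η p * h p) (η z * h z) (η q * h q)
        nlinarith
    _ = ENNReal.ofReal |h p - h z| + ENNReal.ofReal |h z - h q| +
        ENNReal.ofReal K * ENNReal.ofReal |h z| * ENNReal.ofReal γ.len := by
        rw [ENNReal.ofReal_add (by positivity) (by positivity),
          ENNReal.ofReal_add (by positivity) (by positivity), ENNReal.ofReal_mul (by positivity),
          ENNReal.ofReal_mul (by positivity)]
    _ ≤ _ := by
        rw [lint_Ioc_add ht0 ht.2, sub_zero]
        refine add_le_add (add_le_add (hg.sub_le γ le_rfl ht0 ht.2)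
          (hg.sub_le γ ht0 ht.2 le_rfl)) ?_
        gcongr
        exact hH' _

/-- localisation: if `f` vanishes outside open `V` the upper gradient may be cut to `V`. -/
theorem ug_zero_outside {f : X → ℝ} {G : X → ℝ≥0∞} (h : IsUpperGradient f G) {V : Set X}
    (hV : IsOpen V) (h0 : ∀ x ∉ V, f x = 0) : IsUpperGradient f (V.indicator G) := by
  refine ug_of_forall (h.1.indicator hV.measurableSet) fun γ => ?_
  by_cases hall : ∀ t ∈ Icc 0 γ.len, γ.toFun t ∈ V
  · refine (h.le γ).trans (setLIntegral_mono' measurableSet_Ioc fun t ht => ?_)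
    rw [indicator_of_mem (hall t ⟨ht.1.le, ht.2⟩)]
  push Not at hall
  set T := {t ∈ Icc 0 γ.len | γ.toFun t ∉ V} with hT
  have hTc : IsCompact T := by
    have : IsClosed T := by
      have := γ.continuousOn.preimage_isClosed_of_isClosed isClosed_Icc hV.isClosed_compl
      exact this
    exact isCompact_Icc.of_isClosed_subset this (sep_subset _ _)
  obtain ⟨t0, ht0⟩ := hall
  have hne : T.Nonempty := ⟨t0, ht0⟩
  obtain ⟨a, haT, ha⟩ := hTc.exists_isLeast hne
  obtain ⟨b, hbT, hb⟩ := hTc.exists_isGreatest hne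
  have hab : a ≤ b := ha hbT
  have fa : f (γ.toFun a) = 0 := h0 _ haT.2
  have fb : f (γ.toFun b) = 0 := h0 _ hbT.2
  have e1 := h.sub_le γ le_rfl haT.1.1 haT.1.2
  have e2 := h.sub_le γ hbT.1.1 hbT.1.2 le_rfl
  rw [fa, sub_zero] at e1
  rw [fb, zero_sub, abs_neg] at e2
  rw [lint_Ioc_add haT.1.1 haT.1.2, lint_Ioc_add hab hbT.1.2]
  have i1 : ∫⁻ t in Ioc 0 a, G (γ.toFun t) ≤ ∫⁻ t in Ioc 0 a, V.indicator G (γ.toFun t) := by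
    rw [setLIntegral_congr (Ioo_ae_eq_Ioc (μ := volume) (a := (0:ℝ)) (b := a)).symm,
      setLIntegral_congr (Ioo_ae_eq_Ioc (μ := volume) (a := (0:ℝ)) (b := a)).symm]
    refine setLIntegral_mono' measurableSet_Ioo fun t ht => ?_
    have : γ.toFun t ∈ V := by
      by_contra hn
      exact absurd (ha (show t ∈ T from ⟨⟨ht.1.le, ht.2.le.trans haT.1.2⟩, hn⟩)) (not_le.2 ht.2)
    rw [indicator_of_mem this]
  have i2 : ∫⁻ t in Ioc b γ.len, G (γ.toFun t) ≤ ∫⁻ t in Ioc b γ.len, V.indicator G (γ.toFun t) := by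
    refine setLIntegral_mono' measurableSet_Ioc fun t ht => ?_
    have : γ.toFun t ∈ V := by
      by_contra hn
      exact absurd (hb (show t ∈ T from ⟨⟨hbT.1.1.trans ht.1.le, ht.2⟩, hn⟩)) (not_le.2 ht.1)
    rw [indicator_of_mem this]
  calc ENNReal.ofReal |f (γ.toFun 0) - f (γ.toFun γ.len)|
      ≤ ENNReal.ofReal |f (γ.toFun 0)| + ENNReal.ofReal |f (γ.toFun γ.len)| := by
        rw [← ENNReal.ofReal_add (abs_nonneg _) (abs_nonneg _)]
        exact ENNReal.ofReal_le_ofReal (abs_sub _ _)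
    _ ≤ _ := add_le_add (e1.trans i1) ((e2.trans i2).trans le_add_self)


/-- truncation to `[0,1]` -/
def clamp (a : ℝ) : ℝ := max 0 (min 1 a)

theorem clamp_nonneg (a : ℝ) : 0 ≤ clamp a := le_max_left _ _
theorem clamp_le_one (a : ℝ) : clamp a ≤ 1 := max_le zero_le_one (min_le_left _ _)
theorem clamp_of_nonpos {a : ℝ} (h : a ≤ 0) : clamp a = 0 := by
  unfold clamp; exact max_eq_left ((min_le_right _ _).trans h)
theorem clamp_of_one_le {a : ℝ} (h : 1 ≤ a) : clamp a = 1 := by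
  unfold clamp; rw [min_eq_left h]; simp
theorem clamp_mono : Monotone clamp := fun a b h => by
  unfold clamp; gcongr
theorem clamp_lip (a b : ℝ) : |clamp a - clamp b| ≤ |a - b| := by
  unfold clamp
  refine (abs_max_sub_max_le_max _ _ _ _).trans ?_
  simp only [sub_self, abs_zero]
  refine max_le (abs_nonneg _) ((abs_min_sub_min_le_max _ _ _ _).trans ?_)
  simp
theorem clamp_continuous : Continuous clamp := by unfold clamp; fun_prop
theorem clamp_measurable : Measurable clamp := clamp_continuous.measurable

theorem trunc_real {f : ℝ → ℝ} {a b t n : ℝ} (hab : a ≤ b) (hf : ContinuousOn f (Icc a b))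
    (hn : 0 < n) (hlt : clamp (n * (f a - t)) < clamp (n * (f b - t))) :
    ∃ s s', a ≤ s ∧ s ≤ s' ∧ s' ≤ b ∧ (∀ τ ∈ Ioo s s', t < f τ ∧ f τ < t + 1 / n) ∧
      clamp (n * (f b - t)) - clamp (n * (f a - t)) ≤ n * |f s - f s'| := by
  have hfab : f a < f b := by
    by_contra hc
    push Not at hc
    exact absurd (clamp_mono (a := n * (f b - t)) (b := n * (f a - t)) (by gcongr)) (not_le.2 hlt)
  have h1 : f a < t + 1 / n := by
    by_contra hc
    push Not at hc
    rw [clamp_of_one_le (a := n * (f a - t))] at hlt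
    · exact absurd (clamp_le_one _) (not_le.2 hlt)
    · have : n * (1 / n) ≤ n * (f a - t) := by gcongr; linarith
      rwa [mul_one_div_cancel hn.ne'] at this
  have h2 : t < f b := by
    by_contra hc
    push Not at hc
    rw [clamp_of_nonpos (a := n * (f b - t))] at hlt
    · exact absurd (clamp_nonneg _) (not_le.2 hlt)
    · exact mul_nonpos_of_nonneg_of_nonpos hn.le (by linarith)
  set lo := max t (f a) with hlo
  set hi := min (t + 1 / n) (f b) with hhi
  have hn1 : 0 < 1 / n := by positivity
  have hlohi : lo < hi := max_lt (lt_min (by linarith) h2) (lt_min h1 hfab)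
  have c1 : IsCompact {τ ∈ Icc a b | f τ ≤ lo} :=
    isCompact_Icc.of_isClosed_subset (hf.preimage_isClosed_of_isClosed isClosed_Icc isClosed_Iic)
      (sep_subset _ _)
  obtain ⟨s, hs, hsmax⟩ := c1.exists_isGreatest ⟨a, ⟨le_rfl, hab⟩, le_max_right _ _⟩
  have c2 : IsCompact {τ ∈ Icc s b | hi ≤ f τ} :=
    isCompact_Icc.of_isClosed_subset ((hf.mono (Icc_subset_Icc_left hs.1.1)).preimage_isClosed_of_isClosed
      isClosed_Icc isClosed_Ici) (sep_subset _ _)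
  obtain ⟨s', hs', hsmin⟩ := c2.exists_isLeast ⟨b, ⟨hs.1.2, le_rfl⟩, min_le_right _ _⟩
  refine ⟨s, s', hs.1.1, hs'.1.1, hs'.1.2, ?_, ?_⟩
  · intro τ hτ
    constructor
    · by_contra hc
      push Not at hc
      have := hsmax (show τ ∈ {τ ∈ Icc a b | f τ ≤ lo} from
        ⟨⟨hs.1.1.trans hτ.1.le, hτ.2.le.trans hs'.1.2⟩, hc.trans (le_max_left _ _)⟩)
      exact absurd this (not_le.2 hτ.1)
    · by_contra hc
      push Not at hc
      have := hsmin (show τ ∈ {τ ∈ Icc s b | hi ≤ f τ} from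
        ⟨⟨hτ.1.le, hτ.2.le.trans hs'.1.2⟩, (min_le_left _ _).trans hc⟩)
      exact absurd this (not_le.2 hτ.2)
  · have e1 : clamp (n * (f b - t)) ≤ n * (hi - t) := by
      unfold clamp
      refine max_le (mul_nonneg hn.le ?_) ?_
      · have : t ≤ lo := le_max_left _ _
        linarith
      · rcases min_choice (t + 1 / n) (f b) with h | h
        · rw [hhi, h]; refine (min_le_left _ _).trans ?_
          rw [add_sub_cancel_left, mul_one_div_cancel hn.ne']
        · rw [hhi, h]; exact min_le_right _ _
    have e2 : n * (lo - t) ≤ clamp (n * (f a - t)) := by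
      rcases max_choice t (f a) with h | h
      · rw [hlo, h]; simpa using clamp_nonneg _
      · rw [hlo, h]; unfold clamp
        refine le_max_of_le_right (le_min ?_ le_rfl)
        have : n * (f a - t) ≤ n * (1 / n) := by gcongr; linarith
        rwa [mul_one_div_cancel hn.ne'] at this
    have e3 : hi - lo ≤ |f s - f s'| := by
      rw [abs_sub_comm]
      refine le_trans ?_ (le_abs_self _)
      linarith [hs.2, hs'.2]
    nlinarith

theorem IsUpperGradient.continuousOn {w : X → ℝ} {ρ : X → ℝ≥0∞} (h : IsUpperGradient w ρ)
    (γ : Curve X) (hfin : ∫⁻ t in Ioc 0 γ.len, ρ (γ.toFun t) ≠ ∞) :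
    ContinuousOn (fun t => w (γ.toFun t)) (Icc 0 γ.len) := by
  intro t ht
  rw [Metric.continuousWithinAt_iff']
  intro ε hε
  have key := tendsto_setLIntegral_zero (μ := volume.restrict (Ioc 0 γ.len))
    (f := fun t => ρ (γ.toFun t)) hfin (s := fun s : ℝ => uIoc s t) (l := 𝓝 t) (by
      have h1 : Tendsto (fun s : ℝ => ENNReal.ofReal |t - s|) (𝓝 t) (𝓝 0) := by
        have : Continuous fun s : ℝ => ENNReal.ofReal |t - s| := ENNReal.continuous_ofReal.comp (by fun_prop)
        simpa using this.tendsto t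
      refine tendsto_of_tendsto_of_tendsto_of_le_of_le tendsto_const_nhds h1 (fun _ => bot_le) fun s => ?_
      refine (Measure.restrict_apply_le _ _).trans ?_
      simp [Real.volume_uIoc])
  have key2 := (tendsto_order.1 key).2 (ENNReal.ofReal ε) (by simpa using hε)
  filter_upwards [nhdsWithin_le_nhds key2, self_mem_nhdsWithin] with s hs hs'
  rw [Measure.restrict_restrict measurableSet_uIoc] at hs
  have hsub : uIoc s t ∩ Ioc 0 γ.len = uIoc s t := by
    refine inter_eq_left.2 fun τ hτ => ?_
    rw [mem_uIoc] at hτ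
    rcases hτ with hτ | hτ
    · exact ⟨hs'.1.trans_lt hτ.1, hτ.2.trans ht.2⟩
    · exact ⟨ht.1.trans_lt hτ.1, hτ.2.trans hs'.2⟩
  rw [hsub] at hs
  rw [Real.dist_eq]
  rw [← ENNReal.ofReal_lt_ofReal_iff hε]
  refine lt_of_le_of_lt ?_ hs
  rcases le_total s t with hst | hst
  · rw [uIoc_of_le hst]
    exact h.sub_le γ hs'.1 hst ht.2
  · rw [uIoc_of_ge hst, abs_sub_comm]
    exact h.sub_le γ ht.1 hst hs'.2

theorem ug_trunc {w w₀ : X → ℝ} {ρ : X → ℝ≥0∞} (h : IsUpperGradient w ρ) (hw₀ : Measurable w₀)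
    {Z : Set X} (hZ : MeasurableSet Z) (hZw : ∀ x ∉ Z, w x = w₀ x) {n δ : ℝ} (t : ℝ) (hn : 0 < n)
    (hδ : 0 < δ) :
    IsUpperGradient (fun x => clamp (n * (w x - t)))
      (fun x => ENNReal.ofReal n * {x | t < w₀ x ∧ w₀ x < t + 1 / n}.indicator ρ x +
        Z.indicator (fun _ => ∞) x + ENNReal.ofReal δ * ρ x) := by
  have hmS : MeasurableSet {x | t < w₀ x ∧ w₀ x < t + 1 / n} :=
    (measurableSet_lt measurable_const hw₀).inter (measurableSet_lt hw₀ measurable_const)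
  refine ug_of_forall ?_ fun γ => ?_
  · exact (((h.1.indicator hmS).const_mul _).add (measurable_const.indicator hZ)).add (h.1.const_mul _)
  by_cases hfin : ∫⁻ t in Ioc 0 γ.len, ρ (γ.toFun t) = ∞
  · have : ∫⁻ s in Ioc 0 γ.len, ENNReal.ofReal δ * ρ (γ.toFun s) = ∞ := by
      rw [lintegral_const_mul' _ _ ENNReal.ofReal_ne_top, hfin]
      exact ENNReal.mul_top (by simpa using hδ)
    refine le_trans le_top (this.symm.le.trans (lintegral_mono fun s => le_add_self))
  have hc := h.continuousOn γ hfin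
  -- common conclusion
  have concl : ∀ s s', 0 ≤ s → s ≤ s' → s' ≤ γ.len →
      (∀ τ ∈ Ioo s s', t < w (γ.toFun τ) ∧ w (γ.toFun τ) < t + 1 / n) → ∀ D : ℝ,
      D ≤ n * |w (γ.toFun s) - w (γ.toFun s')| → ENNReal.ofReal D ≤
      ∫⁻ s in Ioc 0 γ.len, (ENNReal.ofReal n * {x | t < w₀ x ∧ w₀ x < t + 1 / n}.indicator ρ (γ.toFun s) +
        Z.indicator (fun _ => ∞) (γ.toFun s) + ENNReal.ofReal δ * ρ (γ.toFun s)) := by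
    intro s s' hs hss hs' hτ D hD
    calc ENNReal.ofReal D ≤ ENNReal.ofReal n * ENNReal.ofReal |w (γ.toFun s) - w (γ.toFun s')| := by
          rw [← ENNReal.ofReal_mul hn.le]; exact ENNReal.ofReal_le_ofReal hD
      _ ≤ ENNReal.ofReal n * ∫⁻ τ in Ioc s s', ρ (γ.toFun τ) := by
          gcongr; exact h.sub_le γ hs hss hs'
      _ = ∫⁻ τ in Ioo s s', ENNReal.ofReal n * ρ (γ.toFun τ) := by
          rw [← lintegral_const_mul' _ _ ENNReal.ofReal_ne_top]
          exact setLIntegral_congr (Ioo_ae_eq_Ioc).symm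
      _ ≤ ∫⁻ s in Ioo s s', (ENNReal.ofReal n * {x | t < w₀ x ∧ w₀ x < t + 1 / n}.indicator ρ (γ.toFun s) +
        Z.indicator (fun _ => ∞) (γ.toFun s) + ENNReal.ofReal δ * ρ (γ.toFun s)) := by
          refine setLIntegral_mono' measurableSet_Ioo fun τ hτ' => ?_
          refine le_trans ?_ le_self_add
          by_cases hz : γ.toFun τ ∈ Z
          · simp [hz]
          · refine le_trans ?_ le_self_add
            have := hτ τ hτ'
            rw [hZw _ hz] at this
            rw [indicator_of_mem (show γ.toFun τ ∈ {x | t < w₀ x ∧ w₀ x < t + 1 / n} from this)]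
      _ ≤ _ := by
          refine lintegral_mono_set fun τ hτ' => ⟨hs.trans_lt hτ'.1, hτ'.2.le.trans hs'⟩
  rcases lt_trichotomy (clamp (n * (w (γ.toFun 0) - t))) (clamp (n * (w (γ.toFun γ.len) - t)))
    with hlt | heq | hgt
  · obtain ⟨s, s', h1, h2, h3, h4, h5⟩ := trunc_real γ.len_nonneg hc hn hlt
    refine concl s s' h1 h2 h3 h4 _ ?_
    rw [abs_sub_comm, abs_of_pos (by linarith)]
    exact h5
  · rw [heq]; simp
  · obtain ⟨s, s', h1, h2, h3, h4, h5⟩ := trunc_real (f := fun τ => w (γ.toFun (-τ)))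
      (a := -γ.len) (b := 0) (t := t) (by linarith [γ.len_nonneg]) (by
        have : ContinuousOn (fun τ : ℝ => -τ) (Icc (-γ.len) 0) := by fun_prop
        exact hc.comp this (fun τ hτ => ⟨by linarith [hτ.2], by linarith [hτ.1]⟩)) hn (by simpa using hgt)
    refine concl (-s') (-s) (by linarith) (by linarith) (by linarith) ?_ _ ?_
    · intro τ hτ
      have := h4 (-τ) ⟨by linarith [hτ.2], by linarith [hτ.1]⟩
      simpa using this
    · rw [abs_of_pos (by linarith), abs_sub_comm (w (γ.toFun (-s')))]
      simpa using h5


/-- the geometric data extracted from doubling and Poincaré -/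
structure Geo (μ : Measure X) (C P : ℝ≥0∞) (L : ℕ) : Prop where
  hC : C ≠ ∞
  hC1 : 1 ≤ C
  hP : P ≠ ∞
  pos : ∀ (x : X) (r : ℝ), 0 < r → μ (ball x r) ≠ 0
  fin : ∀ (x : X) (r : ℝ), μ (ball x r) ≠ ∞
  dbl : ∀ (x : X) (r : ℝ), μ (ball x (2 * r)) ≤ C * μ (ball x r)
  pi : ∀ (x : X) (r : ℝ), 0 < r → ∀ (u : X → ℝ) (g : X → ℝ≥0∞), AEMeasurable u μ →
    (∀ x, 0 ≤ u x ∧ u x ≤ 1) → IsUpperGradient u g →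
    ∃ c : ℝ, ∫⁻ y in ball x r, ENNReal.ofReal |u y - c| ∂μ ≤
      P * ENNReal.ofReal r * ∫⁻ y in ball x (2 ^ L * r), g y ∂μ

theorem Geo.dblp {μ : Measure X} {C P : ℝ≥0∞} {L : ℕ} (G : Geo μ C P L) (n : ℕ) (x : X) (r : ℝ) :
    μ (ball x (2 ^ n * r)) ≤ C ^ n * μ (ball x r) := by
  induction n with
  | zero => simp
  | succ n ih =>
    rw [pow_succ' (2 : ℝ), mul_assoc]
    refine (G.dbl _ _).trans ?_
    rw [pow_succ', mul_assoc]
    gcongr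

theorem Geo.dbl_of_le {μ : Measure X} {C P : ℝ≥0∞} {L : ℕ} (G : Geo μ C P L) (n : ℕ) {x y : X}
    {r s : ℝ} (h : dist x y + s ≤ 2 ^ n * r) :
    μ (ball y s) ≤ C ^ n * μ (ball x r) := by
  refine (measure_mono (ball_subset_ball' ?_)).trans (G.dblp n x r)
  rw [dist_comm]; linarith

theorem exists_geo (μ : Measure X) (hdoub : ∃ Cd : ℝ, Doubling μ Cd)
    (hpoin : ∃ CP lam : ℝ, Poincare μ CP lam) : ∃ C P L, Geo μ C P L := by
  obtain ⟨Cd, hCd, hd⟩ := hdoub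
  obtain ⟨CP, lam, hCP, hlam, hp⟩ := hpoin
  obtain ⟨L, hL⟩ := pow_unbounded_of_one_lt lam (one_lt_two)
  have hpos : ∀ (x : X) (r : ℝ), 0 < r → μ (ball x r) ≠ 0 := by
    intro x r hr
    have := (hd x (r / 2) (by positivity)).1
    rw [mul_div_cancel₀ _ two_ne_zero] at this
    exact this.ne'
  have hfin : ∀ (x : X) (r : ℝ), μ (ball x r) ≠ ∞ := by
    intro x r
    rcases le_or_gt r 0 with h | h
    · simp [ball_eq_empty.2 h]
    · exact (hd x r h).2.2.ne
  refine ⟨ENNReal.ofReal Cd, ENNReal.ofReal CP, L, ENNReal.ofReal_ne_top, ?_, ENNReal.ofReal_ne_top,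
    hpos, hfin, ?_, ?_⟩
  · simpa using ENNReal.ofReal_le_ofReal hCd
  · intro x r
    rcases le_or_gt r 0 with h | h
    · rw [ball_eq_empty.2 (by linarith)]; simp
    · exact (hd x r h).2.1
  intro x r hr u g hu hu1 hg
  have hfinr : IsFiniteMeasure (μ.restrict (ball x r)) := ⟨by simpa using (hfin x r).lt_top⟩
  have hloc : MemL1Loc μ Set.univ u := by
    refine ⟨hu.restrict, fun y _ => ⟨1, one_pos, ?_⟩⟩
    calc ∫⁻ z in univ ∩ ball y 1, ENNReal.ofReal |u z| ∂μ ≤ ∫⁻ z in univ ∩ ball y 1, 1 ∂μ := by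
          refine lintegral_mono fun z => ?_
          rw [abs_of_nonneg (hu1 z).1]
          simpa using ENNReal.ofReal_le_ofReal (hu1 z).2
      _ < ∞ := by simpa using (hfin y 1).lt_top
  have key := hp x r hr u g hloc hg
  set c := ⨍ z in ball x r, u z ∂μ with hc
  refine ⟨c, ?_⟩
  have hint : Integrable (fun y => |u y - c|) (μ.restrict (ball x r)) := by
    refine Integrable.abs (Integrable.sub ?_ (integrable_const _))
    refine Integrable.of_bound hu.restrict.aestronglyMeasurable 1 (Eventually.of_forall fun y => ?_)
    rw [Real.norm_eq_abs, abs_of_nonneg (hu1 y).1]; exact (hu1 y).2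
  have hm0 := hpos x r hr
  have hmt := hfin x r
  rw [setAverage_eq, smul_eq_mul, ENNReal.ofReal_mul (by positivity),
    ofReal_integral_eq_lintegral_ofReal hint (Eventually.of_forall fun y => abs_nonneg _), measureReal_def,
    ← ENNReal.toReal_inv, ENNReal.ofReal_toReal (by simpa using hm0)] at key
  have key2 : ∫⁻ y in ball x r, ENNReal.ofReal |u y - c| ∂μ ≤ μ (ball x r) * (ENNReal.ofReal (CP * r) *
            ((∫⁻ y in Metric.ball x (lam * r), g y ∂μ) / μ (Metric.ball x (lam * r)))) := by
    calc _ = μ (ball x r) * ((μ (ball x r))⁻¹ * ∫⁻ y in ball x r, ENNReal.ofReal |u y - c| ∂μ) := by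
          rw [← mul_assoc, ENNReal.mul_inv_cancel hm0 hmt, one_mul]
      _ ≤ _ := by gcongr
  refine key2.trans ?_
  rw [← ENNReal.ofReal_mul (by linarith), mul_left_comm]
  gcongr
  have h1 : ball x r ⊆ ball x (lam * r) := ball_subset_ball (by nlinarith)
  have h2 : ball x (lam * r) ⊆ ball x (2 ^ L * r) := ball_subset_ball (by gcongr)
  calc μ (ball x r) * ((∫⁻ y in ball x (lam * r), g y ∂μ) / μ (ball x (lam * r)))
      ≤ μ (ball x (lam * r)) * ((∫⁻ y in ball x (lam * r), g y ∂μ) / μ (ball x (lam * r))) := by gcongr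
    _ ≤ ∫⁻ y in ball x (lam * r), g y ∂μ := by
        exact ENNReal.mul_div_le
    _ ≤ _ := lintegral_mono_set h2

theorem Geo.proper {μ : Measure X} {C P : ℝ≥0∞} {L : ℕ} (G : Geo μ C P L) [CompleteSpace X] :
    ProperSpace X := by
  have key : ∀ (x : X) (R : ℝ), TotallyBounded (ball x R) := by
    intro x R
    rw [Metric.totallyBounded_iff]
    by_contra hcon
    push Not at hcon
    obtain ⟨ε, hε, hcon⟩ := hcon
    obtain ⟨f, hf1, hf2⟩ := exists_seq_of_forall_finset_exists (fun y => y ∈ ball x R)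
      (fun y z => ε ≤ dist y z) (by
        intro s hs
        have := hcon s s.finite_toSet
        rw [not_subset] at this
        obtain ⟨y, hy, hy'⟩ := this
        refine ⟨y, hy, fun z hz => ?_⟩
        simp only [mem_iUnion, not_exists] at hy'
        have := hy' z hz
        rw [mem_ball, not_lt, dist_comm] at this
        exact this)
    have hR : 0 < R := by
      have := hf1 0
      exact (dist_nonneg.trans_lt this)
    obtain ⟨n, hn⟩ := pow_unbounded_of_one_lt ((R + (R + ε)) / (ε / 2)) one_lt_two
    rw [div_lt_iff₀ (by positivity)] at hn
    have hlow : ∀ i, μ (ball x (R + ε)) / C ^ n ≤ μ (ball (f i) (ε / 2)) := by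
      intro i
      refine ENNReal.div_le_of_le_mul' (G.dbl_of_le n ?_)
      have := hf1 i
      rw [mem_ball] at this
      linarith
    have hfin := Measure.finite_const_le_meas_of_disjoint_iUnion (μ := μ) (ι := ℕ)
      (ε := μ (ball x (R + ε)) / C ^ n)
      (As := fun i => ball (f i) (ε / 2))
      (ENNReal.div_pos (G.pos _ _ (by positivity)) (ENNReal.pow_ne_top G.hC))
      (fun i => measurableSet_ball) (by
        have : ∀ m n, m < n → Disjoint (ball (f m) (ε / 2)) (ball (f n) (ε / 2)) := by
          intro m n hmn
          refine ball_disjoint_ball ?_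
          have := hf2 m n hmn
          linarith
        intro m n hmn
        rcases lt_or_gt_of_ne hmn with h | h
        · exact this _ _ h
        · exact (this _ _ h).symm) (by
        refine ne_top_of_le_ne_top (G.fin x (R + ε)) (measure_mono (iUnion_subset fun i => ?_))
        refine ball_subset_ball' ?_
        have := hf1 i
        rw [mem_ball] at this
        linarith)
    refine infinite_univ (hfin.subset fun i _ => hlow i)
  refine ⟨fun x r => ?_⟩
  refine isCompact_iff_totallyBounded_isComplete.2 ⟨(key x (r + 1)).subset
    (closedBall_subset_ball (by linarith)), isClosed_closedBall.isComplete⟩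

theorem Geo.unif {μ : Measure X} {C P : ℝ≥0∞} {L : ℕ} (G : Geo μ C P L) :
    IsUnifLocDoublingMeasure μ := by
  refine ⟨⟨(C ^ 2).toNNReal, ?_⟩⟩
  filter_upwards [self_mem_nhdsWithin] with ε hε x
  rw [ENNReal.coe_toNNReal (ENNReal.pow_ne_top G.hC)]
  have hε : 0 < ε := hε
  calc μ (closedBall x (2 * ε)) ≤ μ (ball x (2 ^ 2 * ε)) :=
        measure_mono (closedBall_subset_ball (by linarith))
    _ ≤ C ^ 2 * μ (ball x ε) := G.dblp 2 x ε
    _ ≤ _ := by gcongr; exact ball_subset_closedBall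

theorem Geo.locfin {μ : Measure X} {C P : ℝ≥0∞} {L : ℕ} (G : Geo μ C P L) :
    IsLocallyFiniteMeasure μ :=
  ⟨fun x => ⟨ball x 1, ball_mem_nhds x one_pos, (G.fin x 1).lt_top⟩⟩

theorem meas_ball_lint {μ : Measure X} [SFinite μ] [SecondCountableTopology X] {f : X → ℝ≥0∞}
    (hf : Measurable f) (r : ℝ) : Measurable fun x => ∫⁻ y in ball x r, f y ∂μ := by
  have h1 : MeasurableSet {p : X × X | dist p.2 p.1 < r} :=
    (isOpen_lt (by fun_prop) (by fun_prop)).measurableSet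
  have h2 : Measurable fun p : X × X => {p : X × X | dist p.2 p.1 < r}.indicator (fun p => f p.2) p :=
    (hf.comp measurable_snd).indicator h1
  have := h2.lintegral_prod_right' (ν := μ)
  convert this using 2 with x
  rw [← lintegral_indicator measurableSet_ball]
  rfl

theorem meas_ball {μ : Measure X} [SFinite μ] [SecondCountableTopology X] (r : ℝ) :
    Measurable fun x => μ (ball x r) := by
  simpa using meas_ball_lint (μ := μ) (f := fun _ => 1) measurable_const r

/-- swapping the integral of ball averages -/
theorem swap_ball {μ : Measure X} [SFinite μ] [SecondCountableTopology X] {f a : X → ℝ≥0∞}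
    (hf : Measurable f) (ha : Measurable a) (r : ℝ) :
    ∫⁻ x, a x * ∫⁻ y in ball x r, f y ∂μ ∂μ = ∫⁻ y, f y * ∫⁻ x in ball y r, a x ∂μ ∂μ := by
  have h1 : MeasurableSet {p : X × X | dist p.2 p.1 < r} :=
    (isOpen_lt (by fun_prop) (by fun_prop)).measurableSet
  have h2 : Measurable fun p : X × X => {p : X × X | dist p.2 p.1 < r}.indicator
      (fun p => a p.1 * f p.2) p :=
    ((ha.comp measurable_fst).mul (hf.comp measurable_snd)).indicator h1
  have e1 : ∀ x, a x * ∫⁻ y in ball x r, f y ∂μ = ∫⁻ y, {p : X × X | dist p.2 p.1 < r}.indicator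
      (fun p => a p.1 * f p.2) (x, y) ∂μ := by
    intro x
    rw [← lintegral_const_mul _ hf, ← lintegral_indicator measurableSet_ball]
    rfl
  have e2 : ∀ y, f y * ∫⁻ x in ball y r, a x ∂μ = ∫⁻ x, {p : X × X | dist p.2 p.1 < r}.indicator
      (fun p => a p.1 * f p.2) (x, y) ∂μ := by
    intro y
    rw [← lintegral_const_mul _ ha, ← lintegral_indicator measurableSet_ball]
    refine lintegral_congr fun x => ?_
    simp only [indicator, mem_ball, mem_ofPred_eq]
    rw [dist_comm, mul_comm]
  simp_rw [e1, e2]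
  exact lintegral_lintegral_swap h2.aemeasurable


theorem const_close {μ : Measure X} {S : Set X} (h0 : μ S ≠ 0) (ht : μ S ≠ ∞) {u : X → ℝ}
    (hu : AEMeasurable u μ) {c c' a b : ℝ} (ha : 0 ≤ a) (hb : 0 ≤ b)
    (h1 : ∫⁻ y in S, ENNReal.ofReal |u y - c| ∂μ ≤ ENNReal.ofReal a * μ S)
    (h2 : ∫⁻ y in S, ENNReal.ofReal |u y - c'| ∂μ ≤ ENNReal.ofReal b * μ S) : |c - c'| ≤ a + b := by
  have h3 : ENNReal.ofReal |c - c'| * μ S ≤ ENNReal.ofReal (a + b) * μ S := by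
    calc ENNReal.ofReal |c - c'| * μ S = ∫⁻ y in S, ENNReal.ofReal |c - c'| ∂μ := by simp
      _ ≤ ∫⁻ y in S, (ENNReal.ofReal |u y - c| + ENNReal.ofReal |u y - c'|) ∂μ := by
          refine lintegral_mono fun y => ?_
          rw [← ENNReal.ofReal_add (abs_nonneg _) (abs_nonneg _)]
          refine ENNReal.ofReal_le_ofReal ?_
          calc |c - c'| = |(u y - c') - (u y - c)| := by ring_nf
            _ ≤ |u y - c'| + |u y - c| := abs_sub _ _
            _ = _ := add_comm _ _
      _ = (∫⁻ y in S, ENNReal.ofReal |u y - c| ∂μ) + ∫⁻ y in S, ENNReal.ofReal |u y - c'| ∂μ :=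
          lintegral_add_left' (by fun_prop) _
      _ ≤ ENNReal.ofReal a * μ S + ENNReal.ofReal b * μ S := add_le_add h1 h2
      _ = _ := by rw [ENNReal.ofReal_add ha hb, add_mul]
  rw [ENNReal.mul_le_mul_iff_left h0 ht, ENNReal.ofReal_le_ofReal_iff (by positivity)] at h3
  exact h3

theorem Geo.lift {μ : Measure X} {C P : ℝ≥0∞} {L : ℕ} (G : Geo μ C P L) {S T : Set X} (hST : S ⊆ T)
    {n : ℕ} (hm : μ T ≤ C ^ n * μ S) {f : X → ℝ≥0∞} {a : ℝ} (ha : 0 ≤ a)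
    (h : ∫⁻ y in T, f y ∂μ ≤ ENNReal.ofReal a * μ T) :
    ∫⁻ y in S, f y ∂μ ≤ ENNReal.ofReal (a * (C ^ n).toReal) * μ S := by
  refine (lintegral_mono_set hST).trans (h.trans ?_)
  rw [ENNReal.ofReal_mul ha, ENNReal.ofReal_toReal (ENNReal.pow_ne_top G.hC), mul_assoc]
  gcongr

theorem tele {μ : Measure X} {C P : ℝ≥0∞} {L : ℕ} (G : Geo μ C P L) (M : ℝ≥0∞) (hM : M ≠ ∞) (m : ℕ) :
    ∃ K : ℝ, ∀ g : X → ℝ≥0∞, ∀ D : X → ℝ, Continuous D → (∀ x, 0 ≤ D x ∧ D x ≤ 1) →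
      IsUpperGradient D g → ∀ x y,
      (∀ j ≥ m, ∫⁻ z in ball x ((1 / 2) ^ j), g z ∂μ ≤ M * μ (ball x ((1 / 2) ^ j))) →
      (∀ j ≥ m, ∫⁻ z in ball y ((1 / 2) ^ j), g z ∂μ ≤ M * μ (ball y ((1 / 2) ^ j))) →
      ∀ l ≥ m + L + 1, dist x y < (1 / 2) ^ l → |D x - D y| ≤ K * (1 / 2) ^ l := by
  set q : ℝ := (P * M * C ^ L).toReal with hq
  have hqt : P * M * C ^ L ≠ ∞ := ENNReal.mul_ne_top (ENNReal.mul_ne_top G.hP hM) (ENNReal.pow_ne_top G.hC)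
  have hq0 : 0 ≤ q := ENNReal.toReal_nonneg
  set c1 := (C ^ 1).toReal with hc1
  set c2 := (C ^ 2).toReal with hc2
  have hc10 : 0 ≤ c1 := ENNReal.toReal_nonneg
  have hc20 : 0 ≤ c2 := ENNReal.toReal_nonneg
  set K1 := q * c1 + q with hK1
  have hK10 : 0 ≤ K1 := by positivity
  refine ⟨4 * K1 + 2 * K1 + (2 * q * c2 + q), ?_⟩
  intro g D hD hD1 hg
  -- constants
  have hcst : ∀ x, (∀ j ≥ m, ∫⁻ z in ball x ((1 / 2) ^ j), g z ∂μ ≤ M * μ (ball x ((1 / 2) ^ j))) →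
      ∀ j, ∃ c : ℝ, m + L ≤ j → ∫⁻ z in ball x ((1 / 2) ^ j), ENNReal.ofReal |D z - c| ∂μ ≤
        ENNReal.ofReal (q * (1 / 2) ^ j) * μ (ball x ((1 / 2) ^ j)) := by
    intro x hx j
    obtain ⟨c, hc⟩ := G.pi x ((1 / 2) ^ j) (by positivity) D g hD.measurable.aemeasurable hD1 hg
    refine ⟨c, fun hj => hc.trans ?_⟩
    have e : (2 : ℝ) ^ L * (1 / 2) ^ j = (1 / 2) ^ (j - L) := by
      obtain ⟨k, rfl⟩ := Nat.exists_eq_add_of_le (show L ≤ j by omega)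
      rw [Nat.add_sub_cancel_left, pow_add, ← mul_assoc, ← mul_pow]
      norm_num
    have h2 := hx (j - L) (by omega)
    rw [e]
    calc P * ENNReal.ofReal ((1 / 2) ^ j) * ∫⁻ y in ball x ((1 / 2) ^ (j - L)), g y ∂μ
        ≤ P * ENNReal.ofReal ((1 / 2) ^ j) * (M * (C ^ L * μ (ball x ((1 / 2) ^ j)))) := by
          gcongr
          refine h2.trans ?_
          gcongr
          rw [← e]
          exact G.dblp L x _
      _ = _ := by
          rw [ENNReal.ofReal_mul hq0, hq, ENNReal.ofReal_toReal hqt]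
          ring
  have hlim : ∀ x, (∀ j ≥ m, ∫⁻ z in ball x ((1 / 2) ^ j), g z ∂μ ≤ M * μ (ball x ((1 / 2) ^ j))) →
      ∃ c : ℕ → ℝ, (∀ j, m + L ≤ j → ∫⁻ z in ball x ((1 / 2) ^ j), ENNReal.ofReal |D z - c j| ∂μ ≤
        ENNReal.ofReal (q * (1 / 2) ^ j) * μ (ball x ((1 / 2) ^ j))) ∧
        ∀ j, m + L ≤ j → |c j - D x| ≤ 2 * K1 * (1 / 2) ^ j := by
    intro x hx
    choose c hc using hcst x hx
    refine ⟨c, hc, ?_⟩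
    have hstep : ∀ j, m + L ≤ j → |c j - c (j + 1)| ≤ K1 * (1 / 2) ^ j := by
      intro j hj
      have hsub : ball x ((1 / 2 : ℝ) ^ (j + 1)) ⊆ ball x ((1 / 2) ^ j) :=
        ball_subset_ball (pow_le_pow_of_le_one (by norm_num) (by norm_num) (by omega))
      have h1 := G.lift hsub (n := 1) (by
        have := G.dblp 1 x ((1 / 2) ^ (j + 1))
        rwa [show (2 : ℝ) ^ 1 * (1 / 2) ^ (j + 1) = (1 / 2) ^ j by rw [pow_succ]; ring] at this)
        (by positivity) (hc j hj)
      have := const_close (G.pos x _ (by positivity)) (G.fin x _) hD.measurable.aemeasurable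
        (by positivity) (by positivity) h1 (hc (j + 1) (by omega))
      refine this.trans ?_
      have h3 : (1 / 2 : ℝ) ^ (j + 1) ≤ (1 / 2) ^ j := pow_le_pow_of_le_one (by norm_num) (by norm_num) (by omega)
      have h4 := mul_le_mul_of_nonneg_left h3 hq0
      rw [hK1]; nlinarith
    have htend : Tendsto c atTop (𝓝 (D x)) := by
      rw [Metric.tendsto_atTop]
      intro ε hε
      obtain ⟨δ, hδ, hδ'⟩ := Metric.continuous_iff.1 hD x (ε / 2) (by positivity)
      have h1 : Tendsto (fun j : ℕ => q * (1 / 2 : ℝ) ^ j) atTop (𝓝 (q * 0)) :=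
        (tendsto_pow_atTop_nhds_zero_of_lt_one (by norm_num) (by norm_num)).const_mul q
      have h2 : Tendsto (fun j : ℕ => (1 / 2 : ℝ) ^ j) atTop (𝓝 0) :=
        (tendsto_pow_atTop_nhds_zero_of_lt_one (by norm_num) (by norm_num))
      rw [mul_zero] at h1
      obtain ⟨j0, hj0⟩ := eventually_atTop.1 (((tendsto_order.1 h1).2 (ε / 2) (by positivity)).and
        (((tendsto_order.1 h2).2 δ hδ).and (eventually_ge_atTop (m + L))))
      refine ⟨j0, fun j hj => ?_⟩
      obtain ⟨a1, a2, a3⟩ := hj0 j hj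
      have := const_close (c' := D x) (b := ε / 2) (G.pos x _ (by positivity)) (G.fin x _) hD.measurable.aemeasurable
        (by positivity) (by positivity) (hc j a3) (by
          rw [← setLIntegral_const]
          refine setLIntegral_mono' measurableSet_ball fun z hz => ENNReal.ofReal_le_ofReal ?_
          have := hδ' z (lt_trans hz a2)
          exact this.le)
      rw [Real.dist_eq]; linarith
    intro j hj
    have := dist_le_of_le_geometric_two_of_tendsto₀ (f := fun i => c (j + i)) (C := 2 * K1 * (1 / 2) ^ j)
      (a := D x) (by
        intro i
        rw [Real.dist_eq]
        refine (hstep (j + i) (by omega)).trans (le_of_eq ?_)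
        rw [pow_add]; simp [one_div, inv_pow]; field_simp) (by
        refine htend.comp (tendsto_atTop_mono (fun i => Nat.le_add_left i j) tendsto_id))
    simpa [Real.dist_eq] using this
  intro x y hx hy l hl hxy
  obtain ⟨cx, hcx, hcx'⟩ := hlim x hx
  obtain ⟨cy, hcy, hcy'⟩ := hlim y hy
  obtain ⟨k, rfl⟩ : ∃ k, l = k + 1 := ⟨l - 1, by omega⟩
  set r : ℝ := (1 / 2) ^ (k + 1) with hr
  have hrk : (1 / 2 : ℝ) ^ k = 2 * r := by rw [hr, pow_succ]; ring
  have h1 := hcx' k (by omega)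
  have h2 := hcy' (k + 1) (by omega)
  have hr0 : 0 < r := by positivity
  have h3 := G.lift (S := ball y r) (T := ball x ((1 / 2) ^ k)) (n := 2) (by
      rw [hrk]; refine ball_subset_ball' ?_
      rw [dist_comm]; linarith) (by
      refine G.dbl_of_le 2 ?_
      rw [hrk, dist_comm]; linarith) (by positivity) (hcx k (by omega))
  have h4 := const_close (G.pos y _ hr0) (G.fin y _) hD.measurable.aemeasurable
        (by positivity) (by positivity) h3 (hcy (k + 1) (by omega))
  rw [hrk] at h1 h4
  rw [← hr] at h2 h4
  rw [abs_le] at *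
  constructor <;> nlinarith


theorem dens_open {μ : Measure X} {C P : ℝ≥0∞} {L : ℕ} (G : Geo μ C P L) [ProperSpace X]
    {S : Set X} (hS : MeasurableSet S) : ∀ᵐ x ∂μ, x ∈ S → ∀ ε : ℝ≥0∞, ε ≠ 0 →
      ∀ᶠ r in 𝓝[>] (0 : ℝ), μ (ball x r \ S) ≤ ε * μ (ball x r) := by
  have := G.unif
  have := G.locfin
  filter_upwards [(IsUnifLocDoublingMeasure.vitaliFamily μ 1).ae_tendsto_measure_inter_div_of_measurableSet
    hS.compl] with x hx hxS ε hε
  have h1 := hx.comp (IsUnifLocDoublingMeasure.tendsto_closedBall_filterAt μ (K := 1) (x := x)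
    (l := 𝓝[>] (0 : ℝ)) (fun _ => x) (fun r => r) tendsto_id (by
      filter_upwards [self_mem_nhdsWithin] with r hr
      have hr : 0 < r := hr
      simp [hr.le]))
  rw [indicator_of_notMem (by simpa using hxS)] at h1
  have h2 := (tendsto_order.1 h1).2 (ε / C) (ENNReal.div_pos hε G.hC)
  filter_upwards [h2, self_mem_nhdsWithin] with r hr hr0
  have hr0 : 0 < r := hr0
  have hcb : μ (closedBall x r) ≤ C * μ (ball x r) :=
    (measure_mono (closedBall_subset_ball (by linarith))).trans (G.dbl x r)
  have hC0 : C ≠ 0 := (zero_lt_one.trans_le G.hC1).ne'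
  have hcb0 : μ (closedBall x r) ≠ 0 := fun h => G.pos x r hr0 (measure_mono_null ball_subset_closedBall h)
  have hcbt : μ (closedBall x r) ≠ ∞ := ne_top_of_le_ne_top (ENNReal.mul_ne_top G.hC (G.fin x r)) hcb
  have hr1 : μ (Sᶜ ∩ closedBall x r) ≤ ε / C * μ (closedBall x r) :=
    (ENNReal.div_le_iff hcb0 hcbt).1 hr.le
  calc μ (ball x r \ S) ≤ μ (Sᶜ ∩ closedBall x r) :=
        measure_mono fun y hy => ⟨hy.2, ball_subset_closedBall hy.1⟩
    _ ≤ ε / C * (C * μ (ball x r)) := hr1.trans (by gcongr)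
    _ = _ := by rw [← mul_assoc, ENNReal.div_mul_cancel hC0 G.hC]

theorem ae_max {μ : Measure X} {C P : ℝ≥0∞} {L : ℕ} (G : Geo μ C P L) [ProperSpace X]
    {f : X → ℝ≥0∞} (hf : Measurable f) (hfi : ∫⁻ x, f x ∂μ ≠ ∞) : ∀ᵐ x ∂μ, ∃ m : ℕ, ∀ j ≥ m,
      ∫⁻ z in ball x ((1 / 2) ^ j), f z ∂μ ≤ m * μ (ball x ((1 / 2) ^ j)) := by
  have := G.unif
  have := G.locfin
  filter_upwards [(IsUnifLocDoublingMeasure.vitaliFamily μ 1).ae_tendsto_lintegral_div' hf hfi,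
    ae_lt_top hf hfi] with x hx hfx
  have h1 := hx.comp (IsUnifLocDoublingMeasure.tendsto_closedBall_filterAt μ (K := 1) (x := x)
    (l := atTop) (fun _ => x) (fun j : ℕ => (1 / 2 : ℝ) ^ j) (by
      refine tendsto_nhdsWithin_iff.2 ⟨tendsto_pow_atTop_nhds_zero_of_lt_one (by norm_num) (by norm_num),
        Eventually.of_forall fun j => ?_⟩
      exact pow_pos (show (0 : ℝ) < 1 / 2 by norm_num) j) (Eventually.of_forall fun j => by simp))
  obtain ⟨M, hM1, hM2⟩ := ENNReal.lt_iff_exists_nnreal_btwn.1 hfx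
  have h2 := (tendsto_order.1 h1).2 _ hM1
  obtain ⟨j0, hj0⟩ := eventually_atTop.1 h2
  obtain ⟨n, hn⟩ := ENNReal.exists_nat_gt (ENNReal.mul_ne_top hM2.ne G.hC)
  refine ⟨max j0 n, fun j hj => ?_⟩
  have hr0 : (0 : ℝ) < (1 / 2) ^ j := by positivity
  have h3 := hj0 j (le_trans (le_max_left _ _) hj)
  set r : ℝ := (1 / 2) ^ j
  have hcb : μ (closedBall x r) ≤ C * μ (ball x r) :=
    (measure_mono (closedBall_subset_ball (by linarith))).trans (G.dbl x r)
  have hcb0 : μ (closedBall x r) ≠ 0 := fun h => G.pos x r hr0 (measure_mono_null ball_subset_closedBall h)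
  have hcbt : μ (closedBall x r) ≠ ∞ := ne_top_of_le_ne_top (ENNReal.mul_ne_top G.hC (G.fin x r)) hcb
  have hr1 : ∫⁻ z in closedBall x r, f z ∂μ ≤ M * μ (closedBall x r) :=
    (ENNReal.div_le_iff hcb0 hcbt).1 h3.le
  calc ∫⁻ z in ball x r, f z ∂μ ≤ ∫⁻ z in closedBall x r, f z ∂μ := lintegral_mono_set ball_subset_closedBall
    _ ≤ M * (C * μ (ball x r)) := hr1.trans (by gcongr)
    _ = (M * C) * μ (ball x r) := by ring
    _ ≤ _ := by
      gcongr
      refine hn.le.trans ?_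
      exact_mod_cast le_max_right _ _

/-- A function satisfying a pointwise estimate on the sets where the maximal function is bounded
is a.e. measurable. -/
theorem aemeas_of_max {μ : Measure X} {C P : ℝ≥0∞} {L : ℕ} (G : Geo μ C P L) [ProperSpace X]
    {f : X → ℝ≥0∞} (hf : Measurable f) (hfi : ∫⁻ x, f x ∂μ ≠ ∞) {w : X → ℝ}
    (h : ∀ m : ℕ, ∃ K : ℝ, ∀ x y,
      (∀ j ≥ m, ∫⁻ z in ball x ((1 / 2) ^ j), f z ∂μ ≤ m * μ (ball x ((1 / 2) ^ j))) →
      (∀ j ≥ m, ∫⁻ z in ball y ((1 / 2) ^ j), f z ∂μ ≤ m * μ (ball y ((1 / 2) ^ j))) →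
      ∀ l ≥ m + L + 1, dist x y < (1 / 2) ^ l → |w x - w y| ≤ K * (1 / 2) ^ l) : AEMeasurable w μ := by
  have := G.locfin
  set E : ℕ → Set X := fun m => {x | ∀ j ≥ m,
      ∫⁻ z in ball x ((1 / 2) ^ j), f z ∂μ ≤ m * μ (ball x ((1 / 2) ^ j))} with hE
  have hEm : ∀ m, MeasurableSet (E m) := by
    intro m
    simp only [hE, ofPred_forall]
    refine MeasurableSet.iInter fun j => MeasurableSet.iInter fun _ => ?_
    exact measurableSet_le (meas_ball_lint hf _) ((meas_ball _).const_mul _)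
  have hc : ∀ m, AEMeasurable w (μ.restrict (E m)) := by
    intro m
    refine ContinuousOn.aemeasurable ?_ (hEm m)
    obtain ⟨K, hK⟩ := h m
    intro x hx
    rw [Metric.continuousWithinAt_iff]
    intro ε hε
    have h2 : Tendsto (fun j : ℕ => K * (1 / 2 : ℝ) ^ j) atTop (𝓝 (K * 0)) :=
        (tendsto_pow_atTop_nhds_zero_of_lt_one (by norm_num) (by norm_num)).const_mul K
    rw [mul_zero] at h2
    obtain ⟨l, hl1, hl2⟩ := (((tendsto_order.1 h2).2 ε hε).and (eventually_ge_atTop (m + L + 1))).exists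
    refine ⟨(1 / 2) ^ l, by positivity, fun y hy hxy => ?_⟩
    rw [Real.dist_eq]
    exact (hK y x hy hx l hl2 hxy).trans_lt hl1
  have h3 : AEMeasurable w (μ.restrict (⋃ m, E m)) := aemeasurable_iUnion_iff.2 hc
  have h4 : μ.restrict (⋃ m, E m) = μ := by
    rw [Measure.restrict_eq_self_of_ae_mem]
    filter_upwards [ae_max G hf hfi] with x hx
    exact mem_iUnion.2 hx
  rwa [h4] at h3


/-- `z` can be reached from `x` by a coarse chain of cost at most `c` -/
def Reach (κ : X → ℝ) (η : ℝ) (x z : X) (c : ℝ) : Prop :=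
  0 ≤ c ∧ ∃ (ℓ : ℝ) (f : ℝ → X), 0 ≤ ℓ ∧ Measurable f ∧ (∀ s t, dist (f s) (f t) ≤ |s - t| + η) ∧
    (∀ t, dist x (f t) ≤ |t| + η) ∧ (∀ t, ℓ ≤ t → f t = z) ∧
    ∫⁻ t in Ico 0 ℓ, ENNReal.ofReal (κ (f t)) ≤ ENNReal.ofReal c

theorem Reach.base (κ : X → ℝ) {η : ℝ} (hη : 0 ≤ η) (x : X) : Reach κ η x x 0 := by
  refine ⟨le_rfl, 0, fun _ => x, le_rfl, measurable_const, ?_, ?_, fun _ _ => rfl, by simp⟩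
  · intro s t; rw [dist_self]; positivity
  · intro t; rw [dist_self]; positivity

theorem Reach.step {κ : X → ℝ} {η : ℝ} {x z z' : X} {c : ℝ} (h : Reach κ η x z c)
    (hκ0 : 0 ≤ κ z) (hd : dist z z' ≤ η) : Reach κ η x z' (c + κ z * dist z z') := by
  obtain ⟨hc, ℓ, f, hℓ, hf, h1, h2, h3, h4⟩ := h
  have hd0 : 0 ≤ dist z z' := dist_nonneg
  have hcross : ∀ s t, s < ℓ + dist z z' → ℓ + dist z z' ≤ t → dist (f s) z' ≤ |s - t| + η := by
    intro s t hs ht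
    rcases le_or_gt ℓ s with hsl | hsl
    · rw [h3 s hsl]; linarith [abs_nonneg (s - t)]
    · have := h1 s ℓ
      rw [h3 ℓ le_rfl, abs_of_neg (by linarith)] at this
      rw [abs_of_neg (by linarith)]
      linarith [dist_triangle (f s) z z']
  refine ⟨by positivity, ℓ + dist z z', fun t => if t < ℓ + dist z z' then f t else z', by positivity,
    Measurable.ite measurableSet_Iio hf measurable_const, ?_, ?_, ?_, ?_⟩
  · intro s t
    dsimp only
    split_ifs with hs ht ht
    · exact h1 s t
    · exact hcross s t hs (not_lt.1 ht)
    · rw [dist_comm, abs_sub_comm]; exact hcross t s ht (not_lt.1 hs)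
    · rw [dist_self]; linarith [abs_nonneg (s - t)]
  · intro t
    dsimp only
    split_ifs with ht
    · exact h2 t
    · have := h2 ℓ
      rw [h3 ℓ le_rfl, abs_of_nonneg hℓ] at this
      have h5 := dist_triangle x z z'
      have := le_abs_self t
      linarith
  · intro t ht
    simp [not_lt.2 ht]
  · have e : Ico 0 (ℓ + dist z z') = Ico 0 ℓ ∪ Ico ℓ (ℓ + dist z z') :=
      (Ico_union_Ico_eq_Ico hℓ (by linarith)).symm
    rw [ENNReal.ofReal_add hc (by positivity), e]
    refine (lintegral_union_le _ _ _).trans (add_le_add ?_ ?_)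
    · refine le_trans (le_of_eq ?_) h4
      refine setLIntegral_congr_fun measurableSet_Ico fun t ht => ?_
      have : t < ℓ + dist z z' := by linarith [ht.2]
      simp [this]
    · rw [setLIntegral_congr_fun (g := fun _ => ENNReal.ofReal (κ z)) measurableSet_Ico fun t ht => ?_]
      · rw [setLIntegral_const, Real.volume_Ico, ENNReal.ofReal_mul hκ0]
        simp
      · simp [ht.2, h3 t ht.1]

/-- chain distance, truncated at `1` -/
def chainD (κ : X → ℝ) (η : ℝ) (x z : X) : ℝ := sInf (insert 1 {c | Reach κ η x z c})

theorem chainD_bdd (κ : X → ℝ) (η : ℝ) (x z : X) :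
    ∀ c ∈ insert 1 {c | Reach κ η x z c}, (0 : ℝ) ≤ c := by
  rintro c (rfl | h)
  · norm_num
  · exact h.1

theorem chainD_nonneg (κ : X → ℝ) (η : ℝ) (x z : X) : 0 ≤ chainD κ η x z :=
  le_csInf ⟨1, mem_insert _ _⟩ (chainD_bdd κ η x z)

theorem chainD_le_one (κ : X → ℝ) (η : ℝ) (x z : X) : chainD κ η x z ≤ 1 :=
  csInf_le ⟨0, chainD_bdd κ η x z⟩ (mem_insert _ _)

theorem chainD_self (κ : X → ℝ) {η : ℝ} (hη : 0 ≤ η) (x : X) : chainD κ η x x = 0 :=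
  le_antisymm (csInf_le ⟨0, chainD_bdd κ η x x⟩ (mem_insert_of_mem _ (Reach.base κ hη x)))
    (chainD_nonneg _ _ _ _)

theorem chainD_step {κ : X → ℝ} {η : ℝ} {x z z' : X} (hκ0 : 0 ≤ κ z) (hd : dist z z' ≤ η) :
    chainD κ η x z' ≤ chainD κ η x z + κ z * dist z z' := by
  rw [← sub_le_iff_le_add]
  refine le_csInf ⟨1, mem_insert _ _⟩ ?_
  rintro c (rfl | h)
  · have : 0 ≤ κ z * dist z z' := by positivity
    linarith [chainD_le_one κ η x z']
  · rw [sub_le_iff_le_add]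
    exact csInf_le ⟨0, chainD_bdd κ η x z'⟩ (mem_insert_of_mem _ (Reach.step h hκ0 hd))

theorem chainD_lt {κ : X → ℝ} {η : ℝ} {x z : X} {c : ℝ} (h : chainD κ η x z < c) (hc : c ≤ 1) :
    Reach κ η x z c := by
  obtain ⟨c', hc', hlt⟩ := exists_lt_of_csInf_lt ⟨1, mem_insert _ _⟩ h
  rcases hc' with rfl | hc'
  · linarith
  · obtain ⟨h0, ℓ, f, h1, h2, h3, h4, h5, h6⟩ := hc'
    exact ⟨by linarith, ℓ, f, h1, h2, h3, h4, h5, h6.trans (ENNReal.ofReal_le_ofReal hlt.le)⟩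

theorem chainD_ug {κ : X → ℝ} {η : ℝ} {x : X} (hη : 0 < η) (hκ0 : ∀ z, 0 ≤ κ z) {B : ℝ}
    (hκB : ∀ z, κ z ≤ B) (hκc : Continuous κ)
    (hκl : ∀ z z', dist z z' ≤ η → κ z' ≤ κ z + 1) :
    Continuous (chainD κ η x) ∧ IsUpperGradient (chainD κ η x) (fun z => ENNReal.ofReal (κ z + 1)) := by
  have key : ∀ z z', dist z z' ≤ η → |chainD κ η x z - chainD κ η x z'| ≤ (κ z + 1) * dist z z' := by
    intro z z' hd
    have h1 := chainD_step (x := x) (hκ0 z) hd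
    have h2 := chainD_step (η := η) (x := x) (z' := z) (hκ0 z') (by rwa [dist_comm])
    rw [dist_comm z' z] at h2
    have h3 := hκl z z' hd
    have := dist_nonneg (x := z) (y := z')
    rw [abs_le]
    constructor <;> nlinarith
  refine ⟨?_, ?_⟩
  · rw [Metric.continuous_iff]
    intro z ε hε
    have hB : 0 < B + 1 := by linarith [hκ0 z, hκB z]
    refine ⟨min η (ε / (B + 1)), by positivity, fun z' hz' => ?_⟩
    have h1 := key z' z (hz'.le.trans (min_le_left _ _))
    rw [Real.dist_eq]
    refine h1.trans_lt ?_
    have h2 := hz'.trans_le (min_le_right _ _)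
    rw [lt_div_iff₀ hB] at h2
    have := dist_nonneg (x := z') (y := z)
    nlinarith [hκB z']
  · refine ug_of_slope (by fun_prop) hη fun z z' hd => ?_
    rw [← ENNReal.ofReal_mul (by linarith [hκ0 z])]
    exact ENNReal.ofReal_le_ofReal (key z z' hd)

theorem chain_limit [ProperSpace X] {κ : ℕ → X → ℝ} {η : ℕ → ℝ} {ρ : X → ℝ≥0∞}
    (hκc : ∀ i, Continuous (κ i)) (hmono : Monotone κ) (h1 : ∀ i z, 1 ≤ κ i z)
    (hsup : ∀ z, ρ z ≤ ⨆ i, ENNReal.ofReal (κ i z)) (hη1 : ∀ i, η i ≤ 1)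
    (hη : Tendsto η atTop (𝓝 0)) {x y : X} {c : ℝ} (h : ∀ i, Reach (κ i) (η i) x y c) :
    ∃ γ : Curve X, γ.toFun 0 = x ∧ γ.toFun γ.len = y ∧ γ.integral ρ ≤ ENNReal.ofReal c := by
  have hc : 0 ≤ c := (h 0).1
  choose ℓ f hℓ hf hlip hdx hend hint using fun i => (h i).2
  have hℓc : ∀ i, ℓ i ≤ c := by
    intro i
    have : ENNReal.ofReal (ℓ i) ≤ ENNReal.ofReal c := by
      refine le_trans ?_ (hint i)
      calc ENNReal.ofReal (ℓ i) = ∫⁻ t in Ico 0 (ℓ i), 1 := by simp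
        _ ≤ _ := lintegral_mono fun t => by simpa using h1 i (f i t)
    exact (ENNReal.ofReal_le_ofReal_iff hc).1 this
  -- compactness
  have hcomp : IsCompact ((Icc 0 c) ×ˢ (univ.pi fun q : ℚ => closedBall x (|(q : ℝ)| + 1)) :
      Set (ℝ × (ℚ → X))) :=
    isCompact_Icc.prod (isCompact_univ_pi fun q => isCompact_closedBall _ _)
  obtain ⟨⟨l, a⟩, -, φ, hφ, hlim⟩ := hcomp.tendsto_subseq (x := fun i => (ℓ i, fun q : ℚ => f i q)) (by
    intro i
    refine ⟨⟨hℓ i, hℓc i⟩, fun q _ => ?_⟩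
    rw [mem_closedBall, dist_comm]
    linarith [hdx i q, hη1 i])
  have hliml : Tendsto (fun i => ℓ (φ i)) atTop (𝓝 l) := (continuous_fst.tendsto _).comp hlim
  have hlimq : ∀ q : ℚ, Tendsto (fun i => f (φ i) q) atTop (𝓝 (a q)) := fun q =>
    (((continuous_apply q).comp continuous_snd).tendsto _).comp hlim
  have hηφ : Tendsto (fun i => η (φ i)) atTop (𝓝 0) := hη.comp hφ.tendsto_atTop
  have hex : ∀ t : ℝ, ∃ p, Tendsto (fun i => f (φ i) t) atTop (𝓝 p) := by
    intro t
    refine cauchySeq_tendsto_of_complete (Metric.cauchySeq_iff.2 fun ε hε => ?_)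
    obtain ⟨q, hq1, hq2⟩ := exists_rat_btwn (show t < t + ε / 8 by linarith)
    obtain ⟨N, hN⟩ := Metric.cauchySeq_iff.1 (hlimq q).cauchySeq (ε / 4) (by positivity)
    obtain ⟨N', hN'⟩ := eventually_atTop.1 ((tendsto_order.1 hηφ).2 (ε / 8) (by positivity))
    refine ⟨max N N', fun i hi k hk => ?_⟩
    have e1 := hlip (φ i) t q
    have e2 := hlip (φ k) q t
    have e3 := hN i (le_trans (le_max_left _ _) hi) k (le_trans (le_max_left _ _) hk)
    have e4 := hN' i (le_trans (le_max_right _ _) hi)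
    have e5 := hN' k (le_trans (le_max_right _ _) hk)
    have e6 : |t - q| ≤ ε / 8 := by rw [abs_le]; constructor <;> linarith
    rw [abs_sub_comm] at e2
    have := dist_triangle4 (f (φ i) t) (f (φ i) q) (f (φ k) q) (f (φ k) t)
    linarith
  choose g hg using hex
  have hglip : ∀ s t, dist (g s) (g t) ≤ |s - t| := by
    intro s t
    have e1 : Tendsto (fun i => |s - t| + η (φ i)) atTop (𝓝 (|s - t| + 0)) := hηφ.const_add _
    rw [add_zero] at e1
    exact le_of_tendsto_of_tendsto' ((hg s).dist (hg t)) e1 fun i => hlip _ _ _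
  have hgL : LipschitzWith 1 g := LipschitzWith.of_dist_le_mul fun s t => by
    simpa [Real.dist_eq] using hglip s t
  have hl0 : 0 ≤ l := ge_of_tendsto' hliml fun i => hℓ _
  refine ⟨⟨l, hl0, g, hgL.lipschitzOnWith⟩, ?_, ?_, ?_⟩
  · have e1 : Tendsto (fun i => |(0 : ℝ)| + η (φ i)) atTop (𝓝 (|(0 : ℝ)| + 0)) := hηφ.const_add _
    have := le_of_tendsto_of_tendsto' ((tendsto_const_nhds (x := x)).dist (hg 0)) e1 fun i => hdx _ _
    rw [abs_zero, zero_add] at this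
    exact (dist_le_zero.1 this).symm
  · show g l = y
    have e1 : Tendsto (fun i => |l - ℓ (φ i)| + η (φ i)) atTop (𝓝 (|l - l| + 0)) :=
      (tendsto_const_nhds.sub hliml).abs.add hηφ
    have := le_of_tendsto_of_tendsto' ((hg l).dist (tendsto_const_nhds (x := y))) e1 fun i => by
      have := hlip (φ i) l (ℓ (φ i))
      rwa [hend (φ i) (ℓ (φ i)) le_rfl] at this
    rw [sub_self, abs_zero, zero_add] at this
    exact dist_le_zero.1 this
  · show ∫⁻ t in Icc 0 l, ρ (g t) ≤ ENNReal.ofReal c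
    have hj : ∀ j, ∫⁻ t in Ioo 0 l, ENNReal.ofReal (κ j (g t)) ≤ ENNReal.ofReal c := by
      intro j
      have hm : ∀ i, Measurable ((Ico 0 (ℓ (φ i))).indicator fun t => ENNReal.ofReal (κ j (f (φ i) t))) :=
        fun i => (((hκc j).measurable.comp (hf _)).ennreal_ofReal).indicator measurableSet_Ico
      calc ∫⁻ t in Ioo 0 l, ENNReal.ofReal (κ j (g t))
          ≤ ∫⁻ t in Ioo 0 l, liminf (fun i => (Ico 0 (ℓ (φ i))).indicator
              (fun t => ENNReal.ofReal (κ j (f (φ i) t))) t) atTop := by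
            refine setLIntegral_mono' measurableSet_Ioo fun t ht => ?_
            have e1 : Tendsto (fun i => ENNReal.ofReal (κ j (f (φ i) t))) atTop
                (𝓝 (ENNReal.ofReal (κ j (g t)))) :=
              (ENNReal.continuous_ofReal.tendsto _).comp (((hκc j).tendsto _).comp (hg t))
            rw [← e1.liminf_eq]
            refine liminf_le_liminf ?_
            filter_upwards [(tendsto_order.1 hliml).1 t ht.2] with i hi
            rw [indicator_of_mem (show t ∈ Ico 0 (ℓ (φ i)) from ⟨ht.1.le, hi⟩)]
        _ ≤ ∫⁻ t, liminf (fun i => (Ico 0 (ℓ (φ i))).indicator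
              (fun t => ENNReal.ofReal (κ j (f (φ i) t))) t) atTop := setLIntegral_le_lintegral _ _
        _ ≤ liminf (fun i => ∫⁻ t, (Ico 0 (ℓ (φ i))).indicator
              (fun t => ENNReal.ofReal (κ j (f (φ i) t))) t) atTop := lintegral_liminf_le hm
        _ ≤ ENNReal.ofReal c := by
            refine liminf_le_of_frequently_le' (Eventually.frequently ?_)
            filter_upwards [eventually_ge_atTop j] with i hi
            rw [lintegral_indicator measurableSet_Ico]
            refine le_trans (lintegral_mono fun t => ENNReal.ofReal_le_ofReal ?_) (hint (φ i))
            exact hmono (hi.trans hφ.le_apply) _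
    calc ∫⁻ t in Icc 0 l, ρ (g t) = ∫⁻ t in Ioo 0 l, ρ (g t) := by
          rw [restrict_Ioo_eq_restrict_Icc]
      _ ≤ ∫⁻ t in Ioo 0 l, ⨆ j, ENNReal.ofReal (κ j (g t)) := lintegral_mono fun t => hsup _
      _ = ⨆ j, ∫⁻ t in Ioo 0 l, ENNReal.ofReal (κ j (g t)) := by
          refine lintegral_iSup (fun j => ?_) fun i j hij t => ENNReal.ofReal_le_ofReal (hmono hij _)
          exact ((hκc j).comp hgL.continuous).measurable.ennreal_ofReal
      _ ≤ _ := iSup_le hj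


/-- Lipschitz approximation from below -/
def lipApp (ρ : X → ℝ≥0∞) (i : ℕ) (z : X) : ℝ := ⨅ y, ((min (ρ y) i).toReal + i * dist y z)

theorem lipApp_bdd (ρ : X → ℝ≥0∞) (i : ℕ) (z : X) :
    BddBelow (range fun y => ((min (ρ y) i).toReal + i * dist y z)) := by
  refine ⟨0, ?_⟩
  rintro _ ⟨y, rfl⟩
  positivity

theorem lipApp_nonneg (ρ : X → ℝ≥0∞) (i : ℕ) (z : X) : 0 ≤ lipApp ρ i z :=
  Real.iInf_nonneg fun y => by positivity

theorem lipApp_le (ρ : X → ℝ≥0∞) (i : ℕ) (z : X) : lipApp ρ i z ≤ (min (ρ z) i).toReal := by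
  refine (ciInf_le (lipApp_bdd ρ i z) z).trans ?_
  simp

theorem lipApp_le' (ρ : X → ℝ≥0∞) (i : ℕ) (z : X) : ENNReal.ofReal (lipApp ρ i z) ≤ ρ z := by
  refine (ENNReal.ofReal_le_ofReal (lipApp_le ρ i z)).trans ?_
  refine ENNReal.ofReal_toReal_le.trans (min_le_left _ _)

theorem lipApp_le_nat (ρ : X → ℝ≥0∞) (i : ℕ) (z : X) : lipApp ρ i z ≤ i := by
  refine (lipApp_le ρ i z).trans ?_
  have := ENNReal.toReal_mono (ENNReal.natCast_ne_top i) (min_le_right (ρ z) i)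
  simpa using this

theorem lipApp_lip (ρ : X → ℝ≥0∞) (i : ℕ) (z z' : X) :
    lipApp ρ i z' ≤ lipApp ρ i z + i * dist z z' := by
  have : Nonempty X := ⟨z⟩
  rw [← sub_le_iff_le_add]
  refine le_ciInf fun y => ?_
  rw [sub_le_iff_le_add]
  refine (ciInf_le (lipApp_bdd ρ i z') y).trans ?_
  have := dist_triangle y z z'
  have h : (i : ℝ) * dist y z' ≤ i * (dist y z + dist z z') := by gcongr
  linarith

theorem lipApp_cont (ρ : X → ℝ≥0∞) (i : ℕ) : Continuous (lipApp ρ i) := by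
  refine LipschitzWith.continuous (K := i) (LipschitzWith.of_le_add_mul _ fun z z' => ?_)
  simpa [dist_comm] using lipApp_lip ρ i z' z

theorem lipApp_mono (ρ : X → ℝ≥0∞) : Monotone (lipApp ρ) := by
  intro i j hij z
  refine ciInf_mono (lipApp_bdd ρ i z) fun y => ?_
  have h1 : (i : ℝ≥0∞) ≤ j := by exact_mod_cast hij
  gcongr
  exact (min_lt_of_right_lt (ENNReal.natCast_lt_top j)).ne

theorem lipApp_sup {ρ : X → ℝ≥0∞} (hρ : LowerSemicontinuous ρ) (z : X) :
    ρ z ≤ ⨆ i, ENNReal.ofReal (lipApp ρ i z) := by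
  have : Nonempty X := ⟨z⟩
  refine le_of_forall_lt fun t ht => ?_
  obtain ⟨s, hts, hs⟩ := ENNReal.lt_iff_exists_nnreal_btwn.1 ht
  have h1 := hρ z s hs
  obtain ⟨δ, hδ, hδ'⟩ := Metric.eventually_nhds_iff_ball.1 h1
  obtain ⟨i, hi⟩ := exists_nat_ge (max (s : ℝ) (s / δ))
  refine hts.trans_le (le_iSup_of_le i ?_)
  rw [ENNReal.le_ofReal_iff_toReal_le ENNReal.coe_ne_top (lipApp_nonneg _ _ _), ENNReal.coe_toReal]
  refine le_ciInf fun y => ?_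
  by_cases hy : y ∈ ball z δ
  · have h2 : (s : ℝ≥0∞) ≤ min (ρ y) i := by
      refine le_min (hδ' y hy).le ?_
      have h3 : s ≤ (i : ℝ≥0) := by exact_mod_cast (le_max_left _ _).trans hi
      exact_mod_cast h3
    have h4 := ENNReal.toReal_mono (min_lt_of_right_lt (ENNReal.natCast_lt_top i)).ne h2
    rw [ENNReal.coe_toReal] at h4
    have : 0 ≤ (i : ℝ) * dist y z := by positivity
    linarith
  · rw [mem_ball, not_lt] at hy
    have h2 := (le_max_right _ _).trans hi
    rw [div_le_iff₀ hδ] at h2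
    have h3 : (i : ℝ) * δ ≤ i * dist y z := by gcongr
    have : 0 ≤ (min (ρ y) i).toReal := ENNReal.toReal_nonneg
    linarith

theorem aemeas_of_ug {μ : Measure X} {C P : ℝ≥0∞} {L : ℕ} (G : Geo μ C P L) [ProperSpace X]
    {ρ : X → ℝ≥0∞} (hρ : LowerSemicontinuous ρ) (hρi : ∫⁻ x, ρ x ∂μ ≠ ∞) {w : X → ℝ}
    (hw : ∀ x, 0 ≤ w x ∧ w x ≤ 1) (hug : IsUpperGradient w ρ) : AEMeasurable w μ := by
  refine aemeas_of_max G hρ.measurable hρi fun m => ?_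
  obtain ⟨K, hK⟩ := tele G (m + 2) (by finiteness) m
  refine ⟨K, fun x y hx hy l hl hxy => ?_⟩
  set κ : ℕ → X → ℝ := fun i z => 1 + lipApp ρ i z with hκ
  set η : ℕ → ℝ := fun i => 1 / ((i : ℝ) + 1) with hη
  have hη0 : ∀ i, 0 < η i := fun i => by simp only [hη]; positivity
  have hκc : ∀ i, Continuous (κ i) := fun i => continuous_const.add (lipApp_cont ρ i)
  have hadd : ∀ z : X, (∀ j ≥ m, ∫⁻ z in ball z ((1 / 2) ^ j), ρ z ∂μ ≤ m * μ (ball z ((1 / 2) ^ j))) →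
      (∀ j ≥ m, ∫⁻ z in ball z ((1 / 2) ^ j), (ρ z + 2) ∂μ ≤ (m + 2) * μ (ball z ((1 / 2) ^ j))) := by
    intro z hz j hj
    rw [lintegral_add_left hρ.measurable, setLIntegral_const, add_mul]
    gcongr
    exact hz j hj
  have hD : ∀ i, chainD (κ i) (η i) x y ≤ K * (1 / 2) ^ l := by
    intro i
    obtain ⟨h1, h2⟩ := chainD_ug (κ := κ i) (x := x) (hη0 i) (fun z => by
      have := lipApp_nonneg ρ i z
      simp only [hκ]; positivity) (B := 1 + i) (fun z => by
      simp only [hκ]; linarith [lipApp_le_nat ρ i z]) (hκc i) (fun z z' hd => by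
      have h1 := lipApp_lip ρ i z z'
      have h2 : (i : ℝ) * dist z z' ≤ 1 := by
        calc (i : ℝ) * dist z z' ≤ i * η i := by gcongr
          _ ≤ 1 := by
            simp only [hη]; rw [mul_one_div, div_le_one (by positivity)]; linarith
      simp only [hκ]; linarith)
    have h3 : IsUpperGradient (chainD (κ i) (η i) x) (fun z => ρ z + 2) := by
      refine h2.mono (hρ.measurable.add_const _) fun z => ?_
      have e : κ i z + 1 = lipApp ρ i z + 2 := by simp only [hκ]; ring
      rw [e, ENNReal.ofReal_add (lipApp_nonneg _ _ _) (by norm_num)]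
      gcongr
      · exact lipApp_le' ρ i z
      · simp
    have h4 := hK _ _ h1 (fun z => ⟨chainD_nonneg _ _ _ _, chainD_le_one _ _ _ _⟩) h3 x y
      (hadd x hx) (hadd y hy) l hl hxy
    rw [chainD_self _ (hη0 i).le, zero_sub, abs_neg] at h4
    exact (le_abs_self _).trans h4
  refine le_of_forall_gt_imp_ge_of_dense fun c hc => ?_
  rcases le_or_gt c 1 with hc1 | hc1
  · obtain ⟨γ, h0, h1, h2⟩ := chain_limit (κ := κ) (η := η) (ρ := ρ) (x := x) (y := y) (c := c) hκc
      (fun i j hij z => by simp only [hκ]; linarith [lipApp_mono ρ hij z])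
      (fun i z => by simp only [hκ]; linarith [lipApp_nonneg ρ i z])
      (fun z => (lipApp_sup hρ z).trans (iSup_mono fun i => ENNReal.ofReal_le_ofReal (by
        simp only [hκ]; linarith)))
      (fun i => by simp only [hη]; rw [div_le_one (by positivity)]; simp)
      (tendsto_one_div_add_atTop_nhds_zero_nat) (fun i => chainD_lt ((hD i).trans_lt hc) hc1)
    have h3 := hug.2 γ
    unfold UGIneq at h3
    rw [h0, h1] at h3
    have h4 := h3.trans h2
    have hc0 : 0 ≤ c := (chainD_nonneg _ _ _ _).trans ((hD 0).trans hc.le)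
    exact (ENNReal.ofReal_le_ofReal_iff hc0).1 h4
  · rw [abs_le]
    constructor <;> linarith [(hw x).1, (hw x).2, (hw y).1, (hw y).2]


/-- there is a test function for `S` of cost at most `ε` -/
def TestLe (μ : Measure X) (S : Set X) (ε : ℝ≥0∞) : Prop :=
  ∃ (ψ : X → ℝ) (Ψ g : X → ℝ≥0∞), (∀ x, 0 ≤ ψ x ∧ ψ x ≤ 1) ∧ (∀ x ∈ S, 1 ≤ ψ x) ∧ Measurable Ψ ∧
    (∀ x, ENNReal.ofReal (ψ x) ≤ Ψ x) ∧ IsUpperGradient ψ g ∧ ∫⁻ x, Ψ x ∂μ + ∫⁻ x, g x ∂μ ≤ ε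

/-- sets of zero capacity -/
def Small (μ : Measure X) (S : Set X) : Prop := ∀ ε : ℝ≥0∞, ε ≠ 0 → TestLe μ S ε

theorem TestLe.mono {μ : Measure X} {S T : Set X} {ε ε' : ℝ≥0∞} (h : TestLe μ T ε) (hS : S ⊆ T)
    (hε : ε ≤ ε') : TestLe μ S ε' := by
  obtain ⟨ψ, Ψ, g, h1, h2, h3, h4, h5, h6⟩ := h
  exact ⟨ψ, Ψ, g, h1, fun x hx => h2 x (hS hx), h3, h4, h5, h6.trans hε⟩

theorem Small.mono {μ : Measure X} {S T : Set X} (h : Small μ T) (hS : S ⊆ T) : Small μ S :=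
  fun ε hε => (h ε hε).mono hS le_rfl

theorem TestLe.iUnion {μ : Measure X} {ι : Type*} [Countable ι] {S : ι → Set X} {ε : ι → ℝ≥0∞}
    (h : ∀ i, TestLe μ (S i) (ε i)) : TestLe μ (⋃ i, S i) (∑' i, ε i) := by
  choose ψ Ψ g h1 h2 h3 h4 h5 h6 using h
  have hb : ∀ x, BddAbove (range fun i => ψ i x) := fun x => ⟨1, by rintro _ ⟨i, rfl⟩; exact (h1 i x).2⟩
  refine ⟨fun x => ⨆ i, ψ i x, fun x => ∑' i, Ψ i x, fun x => ∑' i, g i x, ?_, ?_, ?_, ?_, ?_, ?_⟩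
  · intro x
    exact ⟨Real.iSup_nonneg fun i => (h1 i x).1, Real.iSup_le (fun i => (h1 i x).2) zero_le_one⟩
  · intro x hx
    obtain ⟨i, hi⟩ := mem_iUnion.1 hx
    exact (h2 i x hi).trans (le_ciSup (hb x) i)
  · exact Measurable.tsum h3
  · intro x
    rcases isEmpty_or_nonempty ι with hι | hι
    · simp
    by_cases ht : ∑' i, Ψ i x = ∞
    · dsimp only; rw [ht]; exact le_top
    refine ENNReal.ofReal_le_of_le_toReal (ciSup_le fun i => ?_)
    rw [← ENNReal.ofReal_le_iff_le_toReal ht]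
    exact (h4 i x).trans (ENNReal.le_tsum i)
  · exact ug_iSup (fun i x => h1 i x) h5
  · rw [lintegral_tsum fun i => (h3 i).aemeasurable, lintegral_tsum fun i => (h5 i).1.aemeasurable,
      ← ENNReal.tsum_add]
    exact ENNReal.tsum_le_tsum h6

theorem Small.iUnion {μ : Measure X} {ι : Type*} [Countable ι] {S : ι → Set X}
    (h : ∀ i, Small μ (S i)) : Small μ (⋃ i, S i) := by
  intro ε hε
  obtain ⟨ε', h1, h2⟩ := ENNReal.exists_pos_sum_of_countable' hε ι
  exact (TestLe.iUnion fun i => h i (ε' i) (h1 i).ne').mono le_rfl h2.le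

theorem Small.union {μ : Measure X} {S T : Set X}
    (hS : Small μ S) (hT : Small μ T) : Small μ (S ∪ T) := by
  rw [union_eq_iUnion]
  exact Small.iUnion fun b => by cases b <;> assumption

theorem ug_lip {f : X → ℝ} {K : ℝ} (hK : 0 ≤ K) (h : ∀ x y, |f x - f y| ≤ K * dist x y) :
    IsUpperGradient f (fun _ => ENNReal.ofReal K) := by
  refine ug_of_slope measurable_const one_pos fun x y _ => ?_
  rw [← ENNReal.ofReal_mul hK]
  exact ENNReal.ofReal_le_ofReal (h x y)

theorem testLe_ball (μ : Measure X) (x : X) {s : ℝ} (hs : 0 < s) :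
    TestLe μ (closedBall x s) (μ (ball x (2 * s)) * (1 + ENNReal.ofReal (1 / s))) := by
  have hlip : ∀ y z, |clamp (2 - dist y x / s) - clamp (2 - dist z x / s)| ≤ 1 / s * dist y z := by
    intro y z
    refine (clamp_lip _ _).trans ?_
    have e : 2 - dist y x / s - (2 - dist z x / s) = 1 / s * (dist z x - dist y x) := by ring
    rw [e, abs_mul, abs_of_pos (by positivity)]
    gcongr
    rw [dist_comm y z]
    exact abs_dist_sub_le z y x
  have hzero : ∀ y ∉ ball x (2 * s), clamp (2 - dist y x / s) = 0 := by
    intro y hy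
    rw [mem_ball, not_lt] at hy
    refine clamp_of_nonpos ?_
    rw [sub_nonpos, le_div_iff₀ hs]
    exact hy
  refine ⟨fun y => clamp (2 - dist y x / s), (ball x (2 * s)).indicator 1, _,
    fun y => ⟨clamp_nonneg _, clamp_le_one _⟩, ?_, measurable_one.indicator measurableSet_ball, ?_,
    ug_zero_outside (ug_lip (by positivity) hlip) isOpen_ball hzero, ?_⟩
  · intro y hy
    dsimp only
    rw [clamp_of_one_le]
    have : dist y x / s ≤ 1 := by rw [div_le_one hs]; exact hy
    linarith
  · intro y
    by_cases hy : y ∈ ball x (2 * s)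
    · rw [indicator_of_mem hy]
      simpa using clamp_le_one _
    · dsimp only
      rw [hzero y hy]; simp
  · rw [lintegral_indicator measurableSet_ball, lintegral_indicator measurableSet_ball]
    simp only [Pi.one_apply, setLIntegral_const]
    rw [mul_add, mul_comm (ENNReal.ofReal _)]
    simp

theorem testLe_ball' {μ : Measure X} {C P : ℝ≥0∞} {L : ℕ} (G : Geo μ C P L) (x : X) {s : ℝ} (hs : 0 < s)
    (hs1 : s ≤ 1) {n : ℕ} :
    TestLe μ (closedBall x (2 ^ n * s)) (2 * C ^ (n + 1) * (ENNReal.ofReal s)⁻¹ * μ (ball x s)) := by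
  refine (testLe_ball μ x (s := 2 ^ n * s) (by positivity)).mono le_rfl ?_
  have h1 : μ (ball x (2 * (2 ^ n * s))) ≤ C ^ (n + 1) * μ (ball x s) := by
    have := G.dblp (n + 1) x s
    rwa [pow_succ', mul_assoc] at this
  have h2 : ENNReal.ofReal (1 / (2 ^ n * s)) ≤ (ENNReal.ofReal s)⁻¹ := by
    rw [← ENNReal.ofReal_inv_of_pos hs, one_div]
    refine ENNReal.ofReal_le_ofReal (inv_anti₀ hs ?_)
    have : (1 : ℝ) ≤ 2 ^ n := one_le_pow₀ (by norm_num)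
    nlinarith
  have h3 : 1 ≤ (ENNReal.ofReal s)⁻¹ := by
    rw [ENNReal.one_le_inv]
    simpa using ENNReal.ofReal_le_ofReal hs1
  calc _ ≤ C ^ (n + 1) * μ (ball x s) * ((ENNReal.ofReal s)⁻¹ + (ENNReal.ofReal s)⁻¹) := by gcongr
    _ = _ := by ring


theorem open_small {μ : Measure X} {ρ : X → ℝ≥0∞} (hρi : ∫⁻ x, ρ x ∂μ ≠ ∞)
    {S : Set X} (hS : μ S = 0) {ε : ℝ≥0∞} (hε : ε ≠ 0) :
    ∃ U, IsOpen U ∧ S ⊆ U ∧ ∫⁻ x in U, ρ x ∂μ < ε := by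
  have : IsFiniteMeasure (μ.withDensity ρ) := isFiniteMeasure_withDensity hρi
  have h0 : (μ.withDensity ρ) S = 0 := withDensity_absolutelyContinuous μ ρ hS
  obtain ⟨U, h1, h2, h3⟩ := Set.exists_isOpen_lt_of_lt (μ := μ.withDensity ρ) S ε
    (by rw [h0]; exact pos_iff_ne_zero.2 hε)
  rw [withDensity_apply _ h2.measurableSet] at h3
  exact ⟨U, h2, h1, h3⟩

/-- thin level set -/
def lev (w₀ : X → ℝ) (t : ℝ) (n : ℕ) : Set X := {x | t < w₀ x ∧ w₀ x < t + 1 / ((n : ℝ) + 1)}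

/-- approximate perimeter of the superlevel set `{w₀ > t}` -/
def mt (μ : Measure X) (w₀ : X → ℝ) (ρ : X → ℝ≥0∞) (t : ℝ) (V : Set X) : ℝ≥0∞ :=
  liminf (fun n : ℕ => ENNReal.ofReal ((n : ℝ) + 1) * ∫⁻ x in V, (lev w₀ t n).indicator ρ x ∂μ) atTop

theorem mt_coarea {μ : Measure X} [SFinite μ] {w₀ : X → ℝ} {ρ : X → ℝ≥0∞} (hw₀ : Measurable w₀)
    (hρ : Measurable ρ) (V : Set X) :
    ∫⁻ t in Ioo (1 / 2 : ℝ) 1, mt μ w₀ ρ t V ≤ ∫⁻ x in V, ρ x ∂μ := by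
  have hj : ∀ n : ℕ, Measurable fun p : ℝ × X => (lev w₀ p.1 n).indicator ρ p.2 := by
    intro n
    have hS : MeasurableSet {p : ℝ × X | p.1 < w₀ p.2 ∧ w₀ p.2 < p.1 + 1 / ((n : ℝ) + 1)} :=
      (measurableSet_lt measurable_fst (hw₀.comp measurable_snd)).inter
        (measurableSet_lt (hw₀.comp measurable_snd) (measurable_fst.add_const _))
    exact (hρ.comp measurable_snd).indicator hS
  have hm : ∀ n : ℕ, Measurable fun t : ℝ =>
      ENNReal.ofReal ((n : ℝ) + 1) * ∫⁻ x in V, (lev w₀ t n).indicator ρ x ∂μ := by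
    intro n
    exact ((hj n).lintegral_prod_right' (ν := μ.restrict V)).const_mul _
  refine (lintegral_liminf_le hm).trans ?_
  refine liminf_le_of_frequently_le' (Frequently.of_forall fun n => ?_)
  rw [lintegral_const_mul _ ((hj n).lintegral_prod_right' (ν := μ.restrict V)),
    lintegral_lintegral_swap (hj n).aemeasurable, ← lintegral_const_mul' _ _ ENNReal.ofReal_ne_top]
  refine lintegral_mono fun x => ?_
  calc ENNReal.ofReal ((n : ℝ) + 1) * ∫⁻ t in Ioo (1 / 2 : ℝ) 1, (lev w₀ t n).indicator ρ x
      ≤ ENNReal.ofReal ((n : ℝ) + 1) * ∫⁻ t, (Ioo (w₀ x - 1 / ((n : ℝ) + 1)) (w₀ x)).indicator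
          (fun _ => ρ x) t := by
        refine mul_le_mul' le_rfl ?_
        refine (setLIntegral_le_lintegral _ _).trans (lintegral_mono fun t => ?_)
        by_cases h1 : x ∈ lev w₀ t n
        · have h2 : t ∈ Ioo (w₀ x - 1 / ((n : ℝ) + 1)) (w₀ x) := ⟨by linarith [h1.2], h1.1⟩
          rw [indicator_of_mem h1, indicator_of_mem h2]
        · rw [indicator_of_notMem h1]; exact zero_le
    _ = ρ x := by
        rw [lintegral_indicator measurableSet_Ioo, setLIntegral_const, Real.volume_Ioo, mul_left_comm,
          ← ENNReal.ofReal_mul (by positivity)]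
        have : ((n : ℝ) + 1) * (w₀ x - (w₀ x - 1 / ((n : ℝ) + 1))) = 1 := by field_simp; ring
        rw [this]; simp

theorem mt_exists {μ : Measure X} [SFinite μ] {w₀ : X → ℝ} {ρ : X → ℝ≥0∞} (hw₀ : Measurable w₀)
    (hρ : Measurable ρ) (V : Set X) {ε : ℝ≥0∞} (hV : ∫⁻ x in V, ρ x ∂μ < ε) :
    ∃ t ∈ Ioo (1 / 2 : ℝ) 1, mt μ w₀ ρ t V ≤ 2 * ε := by
  by_contra hcon
  push Not at hcon
  have h1 := mt_coarea (μ := μ) hw₀ hρ V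
  have h2 : ε ≤ ∫⁻ t in Ioo (1 / 2 : ℝ) 1, mt μ w₀ ρ t V := by
    calc ε = ∫⁻ t in Ioo (1 / 2 : ℝ) 1, 2 * ε := by
          rw [setLIntegral_const, Real.volume_Ioo, mul_comm, ← mul_assoc]
          rw [show (2 : ℝ≥0∞) = ENNReal.ofReal 2 by simp, ← ENNReal.ofReal_mul (by norm_num)]
          norm_num
      _ ≤ _ := setLIntegral_mono' measurableSet_Ioo fun t ht => (hcon t ht).le
  exact absurd (h2.trans h1) (not_le.2 hV)

theorem mt_tsum {μ : Measure X} {w₀ : X → ℝ} {ρ : X → ℝ≥0∞} {t : ℝ} {ι : Type*} [Countable ι]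
    {B : ι → Set X} {U : Set X} (hB : ∀ i, MeasurableSet (B i)) (hd : Pairwise (Function.onFun Disjoint B))
    (hU : ∀ i, B i ⊆ U) : ∑' i, mt μ w₀ ρ t (B i) ≤ mt μ w₀ ρ t U := by
  letI : MeasurableSpace ι := ⊤
  rw [← lintegral_count]
  refine (lintegral_liminf_le fun n => measurable_from_top).trans ?_
  refine liminf_le_liminf (Eventually.of_forall fun n => ?_)
  rw [lintegral_count, ENNReal.tsum_mul_left, ← lintegral_iUnion hB hd]
  gcongr
  exact iUnion_subset hU

theorem mt_poincare {μ : Measure X} {C P : ℝ≥0∞} {L : ℕ} (G : Geo μ C P L) {w w₀ : X → ℝ}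
    {ρ : X → ℝ≥0∞} (hw₀ : Measurable w₀) (hρi : ∫⁻ x, ρ x ∂μ ≠ ∞) (hug : IsUpperGradient w ρ)
    {Z : Set X} (hZ : MeasurableSet Z) (hZ0 : μ Z = 0) (hZw : ∀ x ∉ Z, w x = w₀ x) {q : ℝ≥0∞} (hq : q ≠ ∞)
    {x : X} {r : ℝ} (hr : 0 < r) {t : ℝ} (h1 : μ (ball x r) ≤ q * μ (ball x r ∩ {y | t < w₀ y}))
    (h2 : μ (ball x r) ≤ q * μ (ball x r ∩ {y | w₀ y ≤ t})) :
    μ (ball x r) ≤ 4 * q * P * ENNReal.ofReal r * mt μ w₀ ρ t (ball x (2 ^ L * r)) := by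
  have hae : w =ᵐ[μ] w₀ := by
    have : ∀ᵐ y ∂μ, y ∉ Z := measure_eq_zero_iff_ae_notMem.1 hZ0
    filter_upwards [this] with y hy using hZw y hy
  have hwm : AEMeasurable w μ := ⟨w₀, hw₀, hae⟩
  have hB0 := G.pos x r hr
  have hBt := G.fin x r
  have hT : 4 * q * P * ENNReal.ofReal r ≠ ∞ := by
    have := G.hP
    finiteness
  have htop : Tendsto (fun n : ℕ => μ (ball x r ∩ {y | t + 1 / ((n : ℝ) + 1) ≤ w₀ y})) atTop
      (𝓝 (μ (ball x r ∩ {y | t < w₀ y}))) := by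
    have e : ball x r ∩ {y | t < w₀ y} = ⋃ n : ℕ, (ball x r ∩ {y | t + 1 / ((n : ℝ) + 1) ≤ w₀ y}) := by
      rw [← inter_iUnion]
      congr 1
      ext y
      simp only [mem_ofPred_eq, mem_iUnion]
      constructor
      · intro h
        obtain ⟨n, hn⟩ := exists_nat_one_div_lt (sub_pos.2 h)
        exact ⟨n, by linarith⟩
      · rintro ⟨n, hn⟩
        have : (0 : ℝ) < 1 / ((n : ℝ) + 1) := by positivity
        linarith
    rw [e]
    refine tendsto_measure_iUnion_atTop fun n m hnm => inter_subset_inter_right _ fun y hy => ?_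
    have h3 : 1 / ((m : ℝ) + 1) ≤ 1 / ((n : ℝ) + 1) := Nat.one_div_le_one_div hnm
    simp only [mem_ofPred_eq] at hy ⊢
    linarith
  have hev : ∀ᶠ n : ℕ in atTop, μ (ball x r) ≤
      2 * q * μ (ball x r ∩ {y | t + 1 / ((n : ℝ) + 1) ≤ w₀ y}) := by
    have h3 := ENNReal.Tendsto.const_mul htop (a := 2 * q) (Or.inr (by finiteness))
    refine ((tendsto_order.1 h3).1 (μ (ball x r)) ?_).mono fun n hn => hn.le
    calc μ (ball x r) < 2 * μ (ball x r) := by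
          rw [two_mul]; exact ENNReal.lt_add_right hBt hB0
      _ ≤ 2 * (q * μ (ball x r ∩ {y | t < w₀ y})) := by gcongr
      _ = _ := by ring
  unfold mt
  rw [← ENNReal.liminf_const_mul_of_ne_top hT]
  refine le_liminf_of_le (by isBoundedDefault) ?_
  filter_upwards [hev] with n hn
  -- fixed level
  have hn0 : (0 : ℝ) < (n : ℝ) + 1 := by positivity
  set I := ∫⁻ y in ball x (2 ^ L * r), (lev w₀ t n).indicator ρ y ∂μ with hI
  set J := ∫⁻ y in ball x (2 ^ L * r), ρ y ∂μ with hJ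
  have hJt : J ≠ ∞ := ne_top_of_le_ne_top hρi (setLIntegral_le_lintegral _ _)
  have hlev : MeasurableSet (lev w₀ t n) :=
    (measurableSet_lt measurable_const hw₀).inter (measurableSet_lt hw₀ measurable_const)
  have hδ : ∀ δ : ℝ, 0 < δ → μ (ball x r) ≤ 4 * q * P * ENNReal.ofReal r *
      (ENNReal.ofReal ((n : ℝ) + 1) * I + ENNReal.ofReal δ * J) := by
    intro δ hδ
    obtain ⟨c, hc⟩ := G.pi x r hr (fun y => clamp (((n : ℝ) + 1) * (w y - t))) _
      (clamp_measurable.comp_aemeasurable ((hwm.sub_const t).const_mul _))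
      (fun y => ⟨clamp_nonneg _, clamp_le_one _⟩) (ug_trunc hug hw₀ hZ hZw t hn0 hδ)
    have hrhs : ∫⁻ y in ball x (2 ^ L * r), (ENNReal.ofReal ((n : ℝ) + 1) *
        {x | t < w₀ x ∧ w₀ x < t + 1 / ((n : ℝ) + 1)}.indicator ρ y +
        Z.indicator (fun _ => ∞) y + ENNReal.ofReal δ * ρ y) ∂μ =
        ENNReal.ofReal ((n : ℝ) + 1) * I + ENNReal.ofReal δ * J := by
      have m1 : Measurable fun y => ENNReal.ofReal ((n : ℝ) + 1) * (lev w₀ t n).indicator ρ y :=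
        (hug.1.indicator hlev).const_mul _
      have m2 : Measurable (Z.indicator fun _ : X => (∞ : ℝ≥0∞)) := measurable_const.indicator hZ
      have m12 : Measurable fun y => ENNReal.ofReal ((n : ℝ) + 1) * (lev w₀ t n).indicator ρ y +
        Z.indicator (fun _ => (∞ : ℝ≥0∞)) y := m1.add m2
      have e1 : ∫⁻ y in ball x (2 ^ L * r), Z.indicator (fun _ => (∞ : ℝ≥0∞)) y ∂μ = 0 := by
        rw [lintegral_indicator hZ, setLIntegral_const, Measure.restrict_apply hZ,
          measure_mono_null inter_subset_left hZ0, mul_zero]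
      calc _ = ∫⁻ y in ball x (2 ^ L * r), ((ENNReal.ofReal ((n : ℝ) + 1) * (lev w₀ t n).indicator ρ y +
        Z.indicator (fun _ => ∞) y) + ENNReal.ofReal δ * ρ y) ∂μ := rfl
        _ = _ := by
          rw [lintegral_add_left m12, lintegral_add_left m1, e1,
            lintegral_const_mul' _ _ ENNReal.ofReal_ne_top, lintegral_const_mul' _ _ ENNReal.ofReal_ne_top,
            add_zero]
    rw [hrhs] at hc
    have hhalf : ∀ T : Set X, MeasurableSet T → μ (ball x r) ≤ 2 * q * μ (ball x r ∩ T) →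
        (∀ y ∈ T, y ∉ Z → 1 / 2 ≤ |clamp (((n : ℝ) + 1) * (w y - t)) - c|) →
        μ (ball x r) ≤ 4 * q * ∫⁻ y in ball x r, ENNReal.ofReal |clamp (((n : ℝ) + 1) * (w y - t)) - c| ∂μ := by
      intro T hT hμT hy
      refine hμT.trans ?_
      have h4 : ENNReal.ofReal (1 / 2) * μ (ball x r ∩ T) ≤
          ∫⁻ y in ball x r, ENNReal.ofReal |clamp (((n : ℝ) + 1) * (w y - t)) - c| ∂μ := by
        rw [← setLIntegral_const]
        calc ∫⁻ y in ball x r ∩ T, ENNReal.ofReal (1 / 2) ∂μ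
            ≤ ∫⁻ y in ball x r ∩ T, ENNReal.ofReal |clamp (((n : ℝ) + 1) * (w y - t)) - c| ∂μ := by
              refine lintegral_mono_ae ?_
              have : ∀ᵐ y ∂μ, y ∉ Z := measure_eq_zero_iff_ae_notMem.1 hZ0
              filter_upwards [ae_restrict_of_ae this, ae_restrict_mem (measurableSet_ball.inter hT)]
                with y hyZ hyT
              exact ENNReal.ofReal_le_ofReal (hy y hyT.2 hyZ)
          _ ≤ _ := lintegral_mono_set inter_subset_left
      calc 2 * q * μ (ball x r ∩ T) = 4 * q * (ENNReal.ofReal (1 / 2) * μ (ball x r ∩ T)) := by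
            have : (2 : ℝ≥0∞) = 4 * ENNReal.ofReal (1 / 2) := by
              rw [show (4 : ℝ≥0∞) = ENNReal.ofReal 4 by simp, ← ENNReal.ofReal_mul (by norm_num)]
              norm_num
            rw [this]; ring
        _ ≤ _ := by gcongr
    have h5 : μ (ball x r) ≤ 4 * q * ∫⁻ y in ball x r,
        ENNReal.ofReal |clamp (((n : ℝ) + 1) * (w y - t)) - c| ∂μ := by
      rcases le_or_gt c (1 / 2) with hc2 | hc2
      · refine hhalf {y | t + 1 / ((n : ℝ) + 1) ≤ w₀ y} (measurableSet_le measurable_const hw₀) hn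
          fun y hy hyZ => ?_
        rw [hZw y hyZ, clamp_of_one_le]
        · exact le_trans (by linarith) (le_abs_self _)
        · have hy : t + 1 / ((n : ℝ) + 1) ≤ w₀ y := hy
          have : ((n : ℝ) + 1) * (1 / ((n : ℝ) + 1)) ≤ ((n : ℝ) + 1) * (w₀ y - t) := by
            gcongr; linarith
          rwa [mul_one_div_cancel hn0.ne'] at this
      · refine hhalf {y | w₀ y ≤ t} (measurableSet_le hw₀ measurable_const) ?_ fun y hy hyZ => ?_
        · refine h2.trans ?_
          gcongr
          rw [two_mul]; exact le_self_add
        · have hy : w₀ y ≤ t := hy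
          rw [hZw y hyZ, clamp_of_nonpos (mul_nonpos_of_nonneg_of_nonpos hn0.le (by linarith)), zero_sub,
            abs_neg]
          exact le_trans hc2.le (le_abs_self _)
    calc μ (ball x r) ≤ _ := h5
      _ ≤ 4 * q * (P * ENNReal.ofReal r * (ENNReal.ofReal ((n : ℝ) + 1) * I + ENNReal.ofReal δ * J)) := by gcongr
      _ = _ := by ring
  have hlim : Tendsto (fun δ : ℝ => 4 * q * P * ENNReal.ofReal r *
      (ENNReal.ofReal ((n : ℝ) + 1) * I + ENNReal.ofReal δ * J)) (𝓝[>] 0)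
      (𝓝 (4 * q * P * ENNReal.ofReal r * (ENNReal.ofReal ((n : ℝ) + 1) * I + ENNReal.ofReal 0 * J))) := by
    refine Tendsto.mono_left ?_ nhdsWithin_le_nhds
    refine ENNReal.Tendsto.const_mul (tendsto_const_nhds.add ?_) (Or.inr hT)
    exact ENNReal.Tendsto.mul_const ((ENNReal.continuous_ofReal.tendsto _)) (Or.inr hJt)
  have := ge_of_tendsto hlim (eventually_nhdsWithin_of_forall fun δ hδ' => hδ δ hδ')
  simpa using this


theorem crossing {μ : Measure X} {C P : ℝ≥0∞} {L : ℕ} (G : Geo μ C P L) {E : Set X}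
    (hE : MeasurableSet E) {k : ℝ≥0∞} (hk : 1 ≤ k) {x : X}
    (h1 : ∃ᶠ r in 𝓝[>] (0 : ℝ), μ (ball x r) ≤ k * μ (ball x r ∩ E))
    (h2 : ∃ᶠ r in 𝓝[>] (0 : ℝ), μ (ball x r) ≤ 2 * μ (ball x r \ E)) {R : ℝ} (hR : 0 < R) :
    ∃ r, 0 < r ∧ r < R ∧ μ (ball x r) ≤ 2 * k * C * μ (ball x r ∩ E) ∧
      μ (ball x r) ≤ 2 * k * C * μ (ball x r \ E) := by
  have hC1 := G.hC1
  obtain ⟨r1, g1, hr1⟩ := (h1.and_eventually (Ioo_mem_nhdsGT (show (0 : ℝ) < R / 2 by linarith))).exists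
  obtain ⟨r2, g2, hr2⟩ := (h2.and_eventually (Ioo_mem_nhdsGT hr1.1)).exists
  have hr20 := hr2.1
  obtain ⟨n, hn1, hn2⟩ := exists_nat_pow_near (x := r1 / r2) (y := 2)
    ((one_le_div hr20).2 hr2.2.le) (by norm_num)
  rw [le_div_iff₀ hr20] at hn1
  rw [div_lt_iff₀ hr20] at hn2
  have hdbl : ∀ m : ℕ, μ (ball x (2 ^ (m + 1) * r2)) ≤ C * μ (ball x (2 ^ m * r2)) := by
    intro m
    have := G.dblp 1 x (2 ^ m * r2)
    rwa [pow_one, pow_one, ← mul_assoc, ← pow_succ'] at this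
  have h2q : (2 : ℝ≥0∞) ≤ 2 * k * C := by
    calc (2 : ℝ≥0∞) = 2 * 1 * 1 := by ring
      _ ≤ _ := by gcongr
  have hex : ∃ j : ℕ, μ (ball x (2 ^ j * r2)) ≤ 2 * k * C * μ (ball x (2 ^ j * r2) ∩ E) := by
    refine ⟨n + 1, ?_⟩
    calc μ (ball x (2 ^ (n + 1) * r2)) ≤ C * μ (ball x (2 ^ n * r2)) := hdbl n
      _ ≤ C * μ (ball x r1) := by gcongr
      _ ≤ C * (k * μ (ball x r1 ∩ E)) := by gcongr
      _ ≤ C * (k * μ (ball x (2 ^ (n + 1) * r2) ∩ E)) := by gcongr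
      _ = 1 * k * C * μ (ball x (2 ^ (n + 1) * r2) ∩ E) := by ring
      _ ≤ _ := by gcongr; norm_num
  classical
  have hle : Nat.find hex ≤ n + 1 := by
    refine Nat.find_min' hex ?_
    calc μ (ball x (2 ^ (n + 1) * r2)) ≤ C * μ (ball x (2 ^ n * r2)) := hdbl n
      _ ≤ C * μ (ball x r1) := by gcongr
      _ ≤ C * (k * μ (ball x r1 ∩ E)) := by gcongr
      _ ≤ C * (k * μ (ball x (2 ^ (n + 1) * r2) ∩ E)) := by gcongr
      _ = 1 * k * C * μ (ball x (2 ^ (n + 1) * r2) ∩ E) := by ring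
      _ ≤ _ := by gcongr; norm_num
  have hsp := Nat.find_spec hex
  refine ⟨2 ^ Nat.find hex * r2, by positivity, ?_, hsp, ?_⟩
  · calc 2 ^ Nat.find hex * r2 ≤ 2 ^ (n + 1) * r2 := by gcongr; norm_num
      _ = 2 * (2 ^ n * r2) := by ring
      _ < R := by linarith [hr1.2]
  · rcases Nat.eq_zero_or_pos (Nat.find hex) with h0 | h0
    · rw [h0, pow_zero, one_mul]
      exact g2.trans (by gcongr)
    · obtain ⟨i, hi⟩ := Nat.exists_eq_add_of_lt h0
      rw [zero_add] at hi
      have hmin : ¬ _ := Nat.find_min hex (m := i) (by omega)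
      rw [hi]
      push Not at hmin
      have hfin := G.fin x (2 ^ i * r2)
      have h3 : μ (ball x (2 ^ i * r2)) ≤ 2 * μ (ball x (2 ^ i * r2) \ E) := by
        have e := measure_inter_add_sdiff (μ := μ) (ball x (2 ^ i * r2)) hE
        have h4 : 2 * μ (ball x (2 ^ i * r2) ∩ E) ≤ μ (ball x (2 ^ i * r2)) :=
          le_trans (by gcongr) hmin.le
        have h5 : μ (ball x (2 ^ i * r2)) + μ (ball x (2 ^ i * r2)) ≤
            μ (ball x (2 ^ i * r2)) + 2 * μ (ball x (2 ^ i * r2) \ E) := by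
          calc _ = 2 * (μ (ball x (2 ^ i * r2) ∩ E) + μ (ball x (2 ^ i * r2) \ E)) := by rw [e, two_mul]
            _ = 2 * μ (ball x (2 ^ i * r2) ∩ E) + 2 * μ (ball x (2 ^ i * r2) \ E) := by ring
            _ ≤ _ := by gcongr
        exact (ENNReal.add_le_add_iff_left hfin).1 h5
      calc μ (ball x (2 ^ (i + 1) * r2)) ≤ C * μ (ball x (2 ^ i * r2)) := hdbl i
        _ ≤ C * (2 * μ (ball x (2 ^ i * r2) \ E)) := by gcongr
        _ ≤ C * (2 * μ (ball x (2 ^ (i + 1) * r2) \ E)) := by gcongr <;> norm_num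
        _ = 2 * 1 * C * μ (ball x (2 ^ (i + 1) * r2) \ E) := by ring
        _ ≤ _ := by gcongr

theorem part1 {μ : Measure X} {C P : ℝ≥0∞} {L : ℕ} (G : Geo μ C P L) [ProperSpace X] {w w₀ : X → ℝ}
    {ρ : X → ℝ≥0∞} (hw₀ : Measurable w₀) (hρi : ∫⁻ x, ρ x ∂μ ≠ ∞) (hug : IsUpperGradient w ρ)
    {Z : Set X} (hZ : MeasurableSet Z) (hZ0 : μ Z = 0) (hZw : ∀ x ∉ Z, w x = w₀ x)
    {A : Set X} (hA : ∀ x ∈ A, w x = 1) {k : ℝ≥0∞} (hk : 1 ≤ k) (hkt : k ≠ ∞) {S : Set X} (hS : μ S = 0)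
    (h1 : ∀ x ∈ S, ∃ᶠ r in 𝓝[>] (0 : ℝ), μ (ball x r) ≤ k * μ (ball x r ∩ A))
    (h2 : ∀ x ∈ S, ∃ᶠ r in 𝓝[>] (0 : ℝ), μ (ball x r) ≤ 2 * μ (ball x r ∩ {y | w₀ y ≤ 1 / 2})) :
    Small μ S := by
  have := G.locfin
  intro ε hε
  have hC := G.hC
  have hP := G.hP
  set q := 2 * k * C with hq
  have hqt : q ≠ ∞ := by finiteness
  set K := 2 * C ^ (L + 2 + 1) * (4 * q * P) * 2 with hK
  have hKt : K ≠ ∞ := by finiteness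
  obtain ⟨ε', hε', hKε⟩ : ∃ ε' : ℝ≥0∞, ε' ≠ 0 ∧ K * ε' ≤ ε := by
    refine ⟨ε / (K + 1), ?_, ?_⟩
    · exact (ENNReal.div_pos hε (by finiteness)).ne'
    · calc K * (ε / (K + 1)) ≤ (K + 1) * (ε / (K + 1)) := by gcongr; exact le_self_add
        _ ≤ ε := ENNReal.mul_div_le
  obtain ⟨U, hU, hSU, hUε⟩ := open_small hρi hS hε'
  obtain ⟨t, ht, hmt⟩ := mt_exists (μ := μ) hw₀ hug.1 U hUε
  -- the balls
  have hball : ∀ x ∈ S, ∃ r, 0 < r ∧ 2 ^ L * r ≤ 1 ∧ closedBall x (2 ^ L * r) ⊆ U ∧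
      μ (ball x r) ≤ q * μ (ball x r ∩ {y | t < w₀ y}) ∧
      μ (ball x r) ≤ q * μ (ball x r ∩ {y | w₀ y ≤ t}) := by
    intro x hx
    obtain ⟨R, hR, hRU⟩ := Metric.isOpen_iff.1 hU x (hSU hx)
    have hE : MeasurableSet {y | t < w₀ y} := measurableSet_lt measurable_const hw₀
    have hEc : ∀ r, ball x r \ {y | t < w₀ y} = ball x r ∩ {y | w₀ y ≤ t} := by
      intro r; ext y; simp
    have hp : (0 : ℝ) < 2 ^ L := by positivity
    have q1 : ∀ r : ℝ, k * μ (ball x r ∩ A) ≤ k * μ (ball x r ∩ {y | t < w₀ y}) := by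
      intro r
      calc k * μ (ball x r ∩ A) ≤ k * μ ((ball x r ∩ {y | t < w₀ y}) ∪ Z) := by
            gcongr
            rintro y ⟨hy, hyA⟩
            by_cases hyZ : y ∈ Z
            · exact Or.inr hyZ
            · refine Or.inl ⟨hy, ?_⟩
              show t < w₀ y
              rw [← hZw y hyZ, hA y hyA]; exact ht.2
        _ ≤ k * (μ (ball x r ∩ {y | t < w₀ y}) + μ Z) := by gcongr; exact measure_union_le _ _
        _ = _ := by rw [hZ0, add_zero]
    have q2 : ∀ r : ℝ, 2 * μ (ball x r ∩ {y | w₀ y ≤ 1 / 2}) ≤ 2 * μ (ball x r \ {y | t < w₀ y}) := by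
      intro r
      rw [hEc]
      refine mul_le_mul' le_rfl (measure_mono ?_)
      intro y hy
      exact ⟨hy.1, le_trans (show w₀ y ≤ 1 / 2 from hy.2) ht.1.le⟩
    obtain ⟨r, hr, hrR, a1, a2⟩ := crossing G hE hk (x := x) (R := min R 1 / 2 ^ L)
      ((h1 x hx).mono fun r hr => hr.trans (q1 r)) ((h2 x hx).mono fun r hr => hr.trans (q2 r)) (by positivity)
    rw [lt_div_iff₀ hp, mul_comm] at hrR
    refine ⟨r, hr, (hrR.trans_le (min_le_right _ _)).le, ?_, a1, ?_⟩
    · exact (closedBall_subset_ball (hrR.trans_le (min_le_left _ _))).trans hRU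
    · rwa [hEc] at a2
  choose! r hr0 hr1 hrU hrE hrF using hball
  obtain ⟨u, huS, hdisj, hcov⟩ := Vitali.exists_disjoint_subfamily_covering_enlargement_closedBall S
    (fun x => x) (fun x => 2 ^ L * r x) 1 hr1 4 (by norm_num)
  have hucount : u.Countable := by
    refine hdisj.countable_of_nonempty_interior fun x hx => ?_
    exact ⟨x, ball_subset_interior_closedBall (mem_ball_self (by have := hr0 x (huS hx); positivity))⟩
  have := hucount.to_subtype
  have hdisj' : Pairwise (Function.onFun Disjoint fun x : u => ball (x : X) (2 ^ L * r x)) := by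
    intro x y hxy
    exact (hdisj x.2 y.2 (fun h => hxy (Subtype.ext h))).mono ball_subset_closedBall ball_subset_closedBall
  refine (TestLe.iUnion (ι := u) (S := fun x => closedBall (x : X) (2 ^ (L + 2) * r x))
    (ε := fun x => 2 * C ^ (L + 2 + 1) * (4 * q * P) * mt μ w₀ ρ t (ball (x : X) (2 ^ L * r x)))
    fun x => ?_).mono ?_ ?_
  · have hrx := hr0 x (huS x.2)
    have hrx1 : r x ≤ 1 := by
      refine le_trans ?_ (hr1 x (huS x.2))
      have : (1 : ℝ) ≤ 2 ^ L := one_le_pow₀ (by norm_num)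
      nlinarith
    refine (testLe_ball' G (x : X) hrx hrx1 (n := L + 2)).mono le_rfl ?_
    have := mt_poincare G hw₀ hρi hug hZ hZ0 hZw hqt hrx (hrE x (huS x.2)) (hrF x (huS x.2))
    calc _ ≤ 2 * C ^ (L + 2 + 1) * (ENNReal.ofReal (r x))⁻¹ *
          (4 * q * P * ENNReal.ofReal (r x) * mt μ w₀ ρ t (ball x (2 ^ L * r x))) := by gcongr
      _ = ((ENNReal.ofReal (r x))⁻¹ * ENNReal.ofReal (r x)) *
          (2 * C ^ (L + 2 + 1) * (4 * q * P) * mt μ w₀ ρ t (ball (x : X) (2 ^ L * r x))) := by ring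
      _ = _ := by
        rw [ENNReal.inv_mul_cancel (by simpa using hrx) ENNReal.ofReal_ne_top, one_mul]
  · intro x hx
    obtain ⟨b, hb, hsub⟩ := hcov x hx
    refine mem_iUnion.2 ⟨⟨b, hb⟩, ?_⟩
    have : x ∈ closedBall b (4 * (2 ^ L * r b)) :=
      hsub (mem_closedBall_self (by have := hr0 x hx; positivity))
    have e : (2 : ℝ) ^ (L + 2) * r b = 4 * (2 ^ L * r b) := by ring
    rw [e]; exact this
  · rw [ENNReal.tsum_mul_left]
    calc _ ≤ 2 * C ^ (L + 2 + 1) * (4 * q * P) * mt μ w₀ ρ t U := by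
          gcongr
          exact mt_tsum (fun i => measurableSet_ball) hdisj'
            fun i => ball_subset_closedBall.trans (hrU i (huS i.2))
      _ ≤ 2 * C ^ (L + 2 + 1) * (4 * q * P) * (2 * ε') := by gcongr
      _ = K * ε' := by rw [hK]; ring
      _ ≤ ε := hKε


theorem p2_fubini {μ : Measure X} {C P : ℝ≥0∞} {L : ℕ} (G : Geo μ C P L) [ProperSpace X]
    {f F : X → ℝ≥0∞} (hf : Measurable f) (hF : Measurable F) {d : ℝ} (hd : 0 < d) {M : ℝ≥0∞} (hM : M ≠ ∞)
    {m : ℕ} (h : ∀ x, ∫⁻ y in ball x d, f y ∂μ ≤ M * ∫⁻ y in ball x (2 ^ m * d), F y ∂μ) :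
    ∫⁻ x, f x ∂μ ≤ C ^ (m + 2) * M * ∫⁻ x, F x ∂μ := by
  have := G.locfin
  have hC := G.hC
  set a : X → ℝ≥0∞ := fun x => (μ (ball x d))⁻¹ with ha
  have ham : Measurable a := (meas_ball d).inv
  have h1 : ∀ y, f y ≤ C * (f y * ∫⁻ x in ball y d, a x ∂μ) := by
    intro y
    have : 1 ≤ C * ∫⁻ x in ball y d, a x ∂μ := by
      rw [← lintegral_const_mul' _ _ hC]
      calc (1 : ℝ≥0∞) = (μ (ball y d))⁻¹ * μ (ball y d) :=
            (ENNReal.inv_mul_cancel (G.pos y d hd) (G.fin y d)).symm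
        _ = ∫⁻ x in ball y d, (μ (ball y d))⁻¹ ∂μ := (setLIntegral_const _ _).symm
        _ ≤ _ := by
            refine setLIntegral_mono' measurableSet_ball fun x hx => ?_
            have h3 : μ (ball x d) ≤ C ^ 1 * μ (ball y d) := G.dbl_of_le 1 (by
              have := mem_ball'.1 hx
              rw [pow_one]; linarith)
            rw [pow_one] at h3
            rw [ha, ← div_eq_mul_inv, ENNReal.le_div_iff_mul_le (Or.inl (G.pos x d hd)) (Or.inl (G.fin x d)),
              mul_comm, ← div_eq_mul_inv]
            exact ENNReal.div_le_of_le_mul h3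
    calc f y = f y * 1 := (mul_one _).symm
      _ ≤ f y * (C * ∫⁻ x in ball y d, a x ∂μ) := by gcongr
      _ = _ := by ring
  have h2 : ∀ y, ∫⁻ x in ball y (2 ^ m * d), a x ∂μ ≤ C ^ (m + 1) := by
    intro y
    have hR : 0 < 2 ^ m * d := by positivity
    calc ∫⁻ x in ball y (2 ^ m * d), a x ∂μ
        ≤ ∫⁻ x in ball y (2 ^ m * d), C ^ (m + 1) * (μ (ball y (2 ^ m * d)))⁻¹ ∂μ := by
          refine setLIntegral_mono' measurableSet_ball fun x hx => ?_
          have h3 : μ (ball y (2 ^ m * d)) ≤ C ^ (m + 1) * μ (ball x d) := G.dbl_of_le (m + 1) (by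
            have := mem_ball.1 hx
            rw [pow_succ]; linarith)
          rw [ha, ← div_eq_mul_inv, ENNReal.le_div_iff_mul_le (Or.inl (G.pos y _ hR)) (Or.inl (G.fin y _)),
            mul_comm, ← div_eq_mul_inv]
          exact ENNReal.div_le_of_le_mul h3
      _ = C ^ (m + 1) := by
          rw [setLIntegral_const, mul_assoc, ENNReal.inv_mul_cancel (G.pos y _ hR) (G.fin y _), mul_one]
  calc ∫⁻ x, f x ∂μ ≤ ∫⁻ y, C * (f y * ∫⁻ x in ball y d, a x ∂μ) ∂μ := lintegral_mono h1
    _ = C * ∫⁻ x, a x * ∫⁻ y in ball x d, f y ∂μ ∂μ := by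
        rw [lintegral_const_mul' _ _ hC, swap_ball hf ham]
    _ ≤ C * ∫⁻ x, M * (a x * ∫⁻ y in ball x (2 ^ m * d), F y ∂μ) ∂μ := by
        refine mul_le_mul' le_rfl (lintegral_mono fun x => ?_)
        calc a x * ∫⁻ y in ball x d, f y ∂μ ≤ a x * (M * ∫⁻ y in ball x (2 ^ m * d), F y ∂μ) :=
              mul_le_mul' le_rfl (h x)
          _ = _ := by ring
    _ = C * (M * ∫⁻ y, F y * ∫⁻ x in ball y (2 ^ m * d), a x ∂μ ∂μ) := by
        rw [lintegral_const_mul' _ _ hM, swap_ball hF ham]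
    _ ≤ C * (M * ∫⁻ y, F y * C ^ (m + 1) ∂μ) := by
        refine mul_le_mul' le_rfl (mul_le_mul' le_rfl (lintegral_mono fun y => ?_))
        exact mul_le_mul' le_rfl (h2 y)
    _ = _ := by
        rw [lintegral_mul_const' _ _ (by finiteness)]; ring

theorem p2_ball {μ : Measure X} {C P : ℝ≥0∞} {L : ℕ} (G : Geo μ C P L) {v : X → ℝ} {ρ : X → ℝ≥0∞}
    (hv : ∀ x, 0 ≤ v x ∧ v x ≤ 1) (hvm : AEMeasurable v μ) (hug : IsUpperGradient v ρ) {E : Set X}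
    (hE : MeasurableSet E) (hvE : ∀ᵐ x ∂μ, x ∈ E → v x = 0) {s : X} {r : ℝ} (hr : 0 < r)
    (hs : μ (ball s r) ≤ 2 * μ (ball s r ∩ E)) :
    ∫⁻ x in ball s r, ENNReal.ofReal (v x) ∂μ ≤
      3 * P * ENNReal.ofReal r * ∫⁻ x in ball s (2 ^ L * r), ρ x ∂μ := by
  obtain ⟨c, hc⟩ := G.pi s r hr v ρ hvm hv hug
  set I := ∫⁻ x in ball s r, ENNReal.ofReal |v x - c| ∂μ with hI
  have h1 : ENNReal.ofReal |c| * μ (ball s r) ≤ 2 * I := by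
    calc ENNReal.ofReal |c| * μ (ball s r) ≤ ENNReal.ofReal |c| * (2 * μ (ball s r ∩ E)) := by gcongr
      _ = 2 * ∫⁻ x in ball s r ∩ E, ENNReal.ofReal |c| ∂μ := by rw [setLIntegral_const]; ring
      _ ≤ 2 * ∫⁻ x in ball s r ∩ E, ENNReal.ofReal |v x - c| ∂μ := by
          refine mul_le_mul' le_rfl (lintegral_mono_ae ?_)
          filter_upwards [ae_restrict_of_ae hvE, ae_restrict_mem (measurableSet_ball.inter hE)] with x h1 h2
          rw [h1 h2.2, zero_sub, abs_neg]
      _ ≤ 2 * I := mul_le_mul' le_rfl (lintegral_mono_set inter_subset_left)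
  calc ∫⁻ x in ball s r, ENNReal.ofReal (v x) ∂μ
      ≤ ∫⁻ x in ball s r, (ENNReal.ofReal |v x - c| + ENNReal.ofReal |c|) ∂μ := by
        refine lintegral_mono fun x => ?_
        rw [← ENNReal.ofReal_add (abs_nonneg _) (abs_nonneg _)]
        refine ENNReal.ofReal_le_ofReal ?_
        linarith [le_abs_self (v x - c), le_abs_self c]
    _ = I + ENNReal.ofReal |c| * μ (ball s r) := by
        rw [lintegral_add_right _ measurable_const, setLIntegral_const]
    _ ≤ I + 2 * I := by gcongr
    _ = 3 * I := by ring
    _ ≤ 3 * (P * ENNReal.ofReal r * ∫⁻ x in ball s (2 ^ L * r), ρ x ∂μ) := by gcongr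
    _ = _ := by ring

theorem p2_closure {μ : Measure X} {C P : ℝ≥0∞} {L : ℕ} (G : Geo μ C P L) [ProperSpace X]
    {E : Set X} (hE : MeasurableSet E) {S : Set X} {d₀ : ℝ} (hd₀ : 0 < d₀)
    (hS : ∀ s ∈ S, ∀ r, 0 < r → r < d₀ → μ (ball s r) ≤ 2 * μ (ball s r ∩ E)) :
    μ (closure S \ E) = 0 := by
  have hC := G.hC
  rw [measure_eq_zero_iff_ae_notMem]
  filter_upwards [dens_open G hE.compl] with x hx hxS
  have hC0 : C ≠ 0 := (zero_lt_one.trans_le G.hC1).ne'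
  set ε : ℝ≥0∞ := (4 * C ^ 2)⁻¹ with hε
  have hεC : 4 * (ε * C ^ 2) = 1 := by
    rw [mul_comm ε, ← mul_assoc, hε]
    exact ENNReal.mul_inv_cancel (by simp [hC0]) (by finiteness)
  have h1 := hx hxS.2 ε (by rw [hε]; simp; finiteness)
  obtain ⟨r, hr1, hr⟩ := (h1.and (Ioo_mem_nhdsGT hd₀)).exists
  obtain ⟨s, hs, hxs⟩ := Metric.mem_closure_iff.1 hxS.1 (r / 2) (half_pos hr.1)
  have h2 := hS s hs (r / 2) (half_pos hr.1) (by linarith [hr.1, hr.2])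
  have h3 : μ (ball x r) ≤ C ^ 2 * μ (ball s (r / 2)) := G.dbl_of_le 2 (by
    rw [dist_comm]; linarith)
  have h4 : μ (ball s (r / 2) ∩ E) ≤ μ (ball x r \ Eᶜ) := by
    refine measure_mono fun y hy => ⟨?_, not_not.2 hy.2⟩
    have := mem_ball.1 hy.1
    rw [mem_ball]
    linarith [dist_triangle y s x, dist_comm x s]
  have h5 : 2 * μ (ball s (r / 2)) ≤ μ (ball s (r / 2)) := by
    calc 2 * μ (ball s (r / 2)) ≤ 2 * (2 * (ε * (C ^ 2 * μ (ball s (r / 2))))) := by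
          refine mul_le_mul' le_rfl (h2.trans (mul_le_mul' le_rfl (h4.trans (hr1.trans ?_))))
          gcongr
      _ = (4 * (ε * C ^ 2)) * μ (ball s (r / 2)) := by ring
      _ = _ := by rw [hεC, one_mul]
  rw [two_mul] at h5
  exact absurd h5 (not_le.2 (ENNReal.lt_add_right (G.fin _ _) (G.pos _ _ (half_pos hr.1))))


theorem p2_cost {μ : Measure X} {C P : ℝ≥0∞} {L : ℕ} (G : Geo μ C P L) [ProperSpace X]
    {v v₀ : X → ℝ} {ρ : X → ℝ≥0∞}
    (hv : ∀ x, 0 ≤ v x ∧ v x ≤ 1) (hv₀ : Measurable v₀) (hug : IsUpperGradient v ρ)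
    {Z : Set X} (hZ : MeasurableSet Z) (hZ0 : μ Z = 0) (hZv : ∀ x ∉ Z, v x = v₀ x)
    {E : Set X} (hE : MeasurableSet E) (hvE : ∀ᵐ x ∂μ, x ∈ E → v x = 0)
    {S : Set X} (hSne : S.Nonempty) (hS1 : ∀ s ∈ S, v s = 1) {d₀ : ℝ}
    (hS : ∀ s ∈ S, ∀ r, 0 < r → r < d₀ → μ (ball s r) ≤ 2 * μ (ball s r ∩ E))
    {d : ℝ} (hd : 0 < d) (hd1 : d ≤ 1) (hdd : 4 * d < d₀) :
    TestLe μ S ((24 * C ^ (L + 5) * P + 1) * ∫⁻ x in thickening (2 ^ (L + 4) * d) S, ρ x ∂μ) := by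
  have hP := G.hP
  have hZae : ∀ᵐ x ∂μ, x ∉ Z := measure_eq_zero_iff_ae_notMem.1 hZ0
  have hvm : AEMeasurable v μ := ⟨v₀, hv₀, by filter_upwards [hZae] with x hx using hZv x hx⟩
  set V := thickening (2 * d) S with hV
  set W := thickening (2 ^ (L + 4) * d) S with hW
  have hVo : IsOpen V := isOpen_thickening
  have hWo : IsOpen W := isOpen_thickening
  have hp1 : (1 : ℝ) ≤ 2 ^ L := one_le_pow₀ (by norm_num)
  have hVW : V ⊆ W := thickening_mono (by rw [pow_add]; nlinarith) _
  set H : X → ℝ≥0∞ := fun x => ENNReal.ofReal (v₀ x) + Z.indicator (fun _ => ∞) x with hH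
  have hHm : Measurable H := (hv₀.ennreal_ofReal).add (measurable_const.indicator hZ)
  have hvH : ∀ x, ENNReal.ofReal |v x| ≤ H x := by
    intro x
    rw [abs_of_nonneg (hv x).1]
    by_cases hx : x ∈ Z
    · simp [hH, hx]
    · rw [hZv x hx]; exact le_self_add
  have hHv : H =ᵐ[μ] fun x => ENNReal.ofReal (v x) := by
    filter_upwards [hZae] with x hx
    simp [hH, hx, hZv x hx]
  set J := ∫⁻ x in W, ρ x ∂μ with hJ
  have hfm : Measurable (V.indicator H) := hHm.indicator hVo.measurableSet
  have hI : ∫⁻ x, V.indicator H x ∂μ ≤ C ^ (L + 3 + 2) * (3 * P * ENNReal.ofReal (4 * d)) * J := by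
    have := p2_fubini G hfm (hug.1.indicator hWo.measurableSet) hd
      (M := 3 * P * ENNReal.ofReal (4 * d)) (by finiteness) (m := L + 3) (fun x => ?_)
    · rwa [lintegral_indicator hWo.measurableSet] at this
    by_cases hne : (ball x d ∩ V).Nonempty
    · obtain ⟨z, hz, hzV⟩ := hne
      obtain ⟨s, hs, hzs⟩ := mem_thickening_iff.1 hzV
      have hz' := mem_ball'.1 hz
      have hxs : dist x s < 3 * d := by linarith [dist_triangle x z s]
      calc ∫⁻ y in ball x d, V.indicator H y ∂μ ≤ ∫⁻ y in ball x d, H y ∂μ :=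
            lintegral_mono fun y => indicator_le_self _ _ _
        _ ≤ ∫⁻ y in ball s (4 * d), H y ∂μ := lintegral_mono_set (ball_subset_ball' (by linarith))
        _ = ∫⁻ y in ball s (4 * d), ENNReal.ofReal (v y) ∂μ := lintegral_congr_ae (ae_restrict_of_ae hHv)
        _ ≤ 3 * P * ENNReal.ofReal (4 * d) * ∫⁻ y in ball s (2 ^ L * (4 * d)), ρ y ∂μ :=
            p2_ball G hv hvm hug hE hvE (by positivity) (hS s hs (4 * d) (by positivity) hdd)
        _ ≤ _ := by
            refine mul_le_mul' le_rfl ?_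
            calc ∫⁻ y in ball s (2 ^ L * (4 * d)), ρ y ∂μ
                = ∫⁻ y in ball s (2 ^ L * (4 * d)), W.indicator ρ y ∂μ := by
                  refine setLIntegral_congr_fun measurableSet_ball fun y hy => ?_
                  have : y ∈ W := mem_thickening_iff.2 ⟨s, hs, (mem_ball.1 hy).trans_le (by
                    rw [pow_add]; nlinarith)⟩
                  simp only [indicator_of_mem this]
              _ ≤ _ := lintegral_mono_set (ball_subset_ball' (by
                  rw [pow_add, dist_comm]; nlinarith))
    · have : ∫⁻ y in ball x d, V.indicator H y ∂μ = 0 := by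
        rw [setLIntegral_congr_fun (g := fun _ => 0) measurableSet_ball, lintegral_zero]
        intro y hy
        exact indicator_of_notMem (fun h => hne ⟨y, hy, h⟩) _
      rw [this]; exact zero_le
  -- the cut-off
  have hlip : ∀ x y, |clamp (2 - infDist x S / d) - clamp (2 - infDist y S / d)| ≤ 1 / d * dist x y := by
    intro x y
    refine (clamp_lip _ _).trans ?_
    have e : 2 - infDist x S / d - (2 - infDist y S / d) = 1 / d * (infDist y S - infDist x S) := by ring
    rw [e, abs_mul, abs_of_pos (by positivity)]
    gcongr
    rw [abs_le]
    constructor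
    · linarith [infDist_le_infDist_add_dist (s := S) (x := x) (y := y)]
    · linarith [infDist_le_infDist_add_dist (s := S) (x := y) (y := x), dist_comm x y]
  have hout : ∀ x ∉ V, clamp (2 - infDist x S / d) * v x = 0 := by
    intro x hx
    rw [clamp_of_nonpos, zero_mul]
    have : ¬ infDist x S < 2 * d := fun h => hx ((mem_thickening_iff_infDist_lt hSne).2 h)
    push Not at this
    rw [sub_nonpos, le_div_iff₀ hd]; exact this
  have hug2 := ug_zero_outside (ug_mul (K := 1 / d) (η := fun x => clamp (2 - infDist x S / d)) (by positivity)
    (fun x => by rw [abs_of_nonneg (clamp_nonneg _)]; exact clamp_le_one _) hlip hug hHm hvH) hVo hout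
  refine ⟨_, V.indicator H, _, fun x => ⟨mul_nonneg (clamp_nonneg _) (hv x).1,
    mul_le_one₀ (clamp_le_one _) (hv x).1 (hv x).2⟩, ?_, hfm, ?_, hug2, ?_⟩
  · intro s hs
    rw [hS1 s hs, infDist_zero_of_mem hs, clamp_of_one_le (by norm_num)]; norm_num
  · intro x
    by_cases hx : x ∈ V
    · rw [indicator_of_mem hx]
      refine le_trans (ENNReal.ofReal_le_ofReal ?_) (hvH x)
      rw [abs_of_nonneg (hv x).1]
      exact mul_le_of_le_one_left (hv x).1 (clamp_le_one _)
    · rw [hout x hx]; simp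
  · rw [lintegral_indicator hVo.measurableSet (fun x => ρ x + _), lintegral_add_left hug.1,
      lintegral_const_mul' _ _ ENNReal.ofReal_ne_top, ← lintegral_indicator hVo.measurableSet H]
    have h1 : ∫⁻ x in V, ρ x ∂μ ≤ J := lintegral_mono_set hVW
    have h2 : ENNReal.ofReal (4 * d) + ENNReal.ofReal (1 / d) * ENNReal.ofReal (4 * d) ≤ 8 := by
      rw [← ENNReal.ofReal_mul (by positivity), ← ENNReal.ofReal_add (by positivity) (by positivity),
        show (8 : ℝ≥0∞) = ENNReal.ofReal 8 by simp]
      refine ENNReal.ofReal_le_ofReal ?_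
      have : 1 / d * (4 * d) = 4 := by field_simp
      rw [this]; linarith
    set I := ∫⁻ x, V.indicator H x ∂μ
    calc I + (∫⁻ x in V, ρ x ∂μ + ENNReal.ofReal (1 / d) * I)
        ≤ C ^ (L + 3 + 2) * (3 * P * ENNReal.ofReal (4 * d)) * J + (J + ENNReal.ofReal (1 / d) *
          (C ^ (L + 3 + 2) * (3 * P * ENNReal.ofReal (4 * d)) * J)) := by gcongr
      _ = C ^ (L + 5) * 3 * P * J * (ENNReal.ofReal (4 * d) + ENNReal.ofReal (1 / d) * ENNReal.ofReal (4 * d))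
          + J := by ring
      _ ≤ C ^ (L + 5) * 3 * P * J * 8 + J := by gcongr
      _ = _ := by ring

theorem part2 {μ : Measure X} {C P : ℝ≥0∞} {L : ℕ} (G : Geo μ C P L) [ProperSpace X] {w w₀ : X → ℝ}
    {ρ : X → ℝ≥0∞} (hw₀ : Measurable w₀) (hρi : ∫⁻ x, ρ x ∂μ ≠ ∞) (hug : IsUpperGradient w ρ)
    {Z : Set X} (hZ : MeasurableSet Z) (hZ0 : μ Z = 0) (hZw : ∀ x ∉ Z, w x = w₀ x)
    {S : Set X} (hS0 : ∀ s ∈ S, w s = 0) {d₀ : ℝ} (hd₀ : 0 < d₀)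
    (hS : ∀ s ∈ S, ∀ r, 0 < r → r < d₀ → μ (ball s r) ≤ 2 * μ (ball s r ∩ {y | 1 / 2 < w₀ y})) :
    Small μ S := by
  rcases S.eq_empty_or_nonempty with rfl | hSne
  · intro ε hε
    exact ⟨fun _ => 0, fun _ => 0, fun _ => 0, by simp, by simp, measurable_const, by simp,
      ⟨measurable_const, fun γ => by simp [UGIneq]⟩, by simp⟩
  intro ε hε
  have hC := G.hC
  have hP := G.hP
  set K := 24 * C ^ (L + 5) * P + 1 with hK
  have hKt : K ≠ ∞ := by finiteness
  have hE : MeasurableSet {y | 1 / 2 < w₀ y} := measurableSet_lt measurable_const hw₀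
  set N := ∫⁻ x, ρ x ∂μ with hN
  obtain ⟨δ, hδ, hδε⟩ : ∃ δ : ℝ, 0 < δ ∧ K * (ENNReal.ofReal δ * N) < ε := by
    have h1 : Tendsto (fun δ : ℝ => K * (ENNReal.ofReal δ * N)) (𝓝[>] 0) (𝓝 (K * (ENNReal.ofReal 0 * N))) := by
      refine Tendsto.mono_left ?_ nhdsWithin_le_nhds
      exact ENNReal.Tendsto.const_mul (ENNReal.Tendsto.mul_const
        ((ENNReal.continuous_ofReal.tendsto _)) (Or.inr hρi)) (Or.inr hKt)
    simp only [ENNReal.ofReal_zero, zero_mul, mul_zero] at h1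
    obtain ⟨δ, h2, h3⟩ := (((tendsto_order.1 h1).2 ε (pos_iff_ne_zero.2 hε)).and self_mem_nhdsWithin).exists
    exact ⟨δ, h3, h2⟩
  have hug1 := ug_trunc hug hw₀ hZ hZw 0 (two_pos) hδ
  set ρ' : X → ℝ≥0∞ := fun x => ENNReal.ofReal 2 * {x | 0 < w₀ x ∧ w₀ x < 0 + 1 / 2}.indicator ρ x +
        Z.indicator (fun _ => ∞) x + ENNReal.ofReal δ * ρ x with hρ'
  have hug2 : IsUpperGradient (fun x => 1 - clamp (2 * (w x - 0))) ρ' := by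
    have := hug1.comp (φ := fun a => 1 - a) zero_le_one (fun a b => by
      rw [one_mul, abs_sub_comm]; ring_nf; rfl)
    simpa using this
  have hB : MeasurableSet {x | 0 < w₀ x ∧ w₀ x < 0 + 1 / 2} :=
    (measurableSet_lt measurable_const hw₀).inter (measurableSet_lt hw₀ measurable_const)
  have hint : ∀ T : Set X, MeasurableSet T → ∫⁻ x in T, ρ' x ∂μ =
      ENNReal.ofReal 2 * ∫⁻ x in T ∩ {x | 0 < w₀ x ∧ w₀ x < 0 + 1 / 2}, ρ x ∂μ +
        ENNReal.ofReal δ * ∫⁻ x in T, ρ x ∂μ := by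
    intro T hT
    have m1 : Measurable fun x => ENNReal.ofReal 2 * {x | 0 < w₀ x ∧ w₀ x < 0 + 1 / 2}.indicator ρ x :=
      (hug.1.indicator hB).const_mul _
    have m2 : Measurable (Z.indicator fun _ : X => (∞ : ℝ≥0∞)) := measurable_const.indicator hZ
    have m12 : Measurable fun x => ENNReal.ofReal 2 * {x | 0 < w₀ x ∧ w₀ x < 0 + 1 / 2}.indicator ρ x +
      Z.indicator (fun _ => (∞ : ℝ≥0∞)) x := m1.add m2
    have e1 : ∫⁻ y in T, Z.indicator (fun _ => (∞ : ℝ≥0∞)) y ∂μ = 0 := by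
      rw [lintegral_indicator hZ, setLIntegral_const, Measure.restrict_apply hZ,
        measure_mono_null inter_subset_left hZ0, mul_zero]
    rw [lintegral_add_left m12, lintegral_add_left m1, e1, lintegral_const_mul' _ _ ENNReal.ofReal_ne_top,
      lintegral_const_mul' _ _ ENNReal.ofReal_ne_top, add_zero, lintegral_indicator hB,
      Measure.restrict_restrict hB, inter_comm]
  have hcl : ∫⁻ x in closure S, ρ' x ∂μ ≤ ENNReal.ofReal δ * N := by
    rw [hint _ isClosed_closure.measurableSet]
    have : μ (closure S ∩ {x | 0 < w₀ x ∧ w₀ x < 0 + 1 / 2}) = 0 := by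
      refine measure_mono_null ?_ (p2_closure G hE hd₀ hS)
      rintro x ⟨hx, hx2⟩
      refine ⟨hx, fun h => ?_⟩
      have h1 : 1 / 2 < w₀ x := h
      have h2 : w₀ x < 0 + 1 / 2 := hx2.2
      linarith
    rw [setLIntegral_measure_zero _ _ this, mul_zero, zero_add]
    gcongr
    exact setLIntegral_le_lintegral _ _
  have hρ't : ∫⁻ x, ρ' x ∂μ ≠ ∞ := by
    have h1 := hint univ MeasurableSet.univ
    rw [setLIntegral_univ, setLIntegral_univ] at h1
    rw [h1]
    have : ∫⁻ x in univ ∩ {x | 0 < w₀ x ∧ w₀ x < 0 + 1 / 2}, ρ x ∂μ ≠ ∞ :=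
      ne_top_of_le_ne_top hρi (setLIntegral_le_lintegral _ _)
    finiteness
  have hlim : Tendsto (fun r => ∫⁻ x in thickening r S, ρ' x ∂μ) (𝓝[>] 0)
      (𝓝 (∫⁻ x in closure S, ρ' x ∂μ)) := by
    have : IsFiniteMeasure (μ.withDensity ρ') := isFiniteMeasure_withDensity hρ't
    have h1 := tendsto_measure_thickening (μ := μ.withDensity ρ') (s := S)
      ⟨1, one_pos, measure_ne_top _ _⟩
    rw [withDensity_apply _ isClosed_closure.measurableSet] at h1
    refine h1.congr fun r => ?_
    rw [withDensity_apply _ isOpen_thickening.measurableSet]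
  have hlimK := ENNReal.Tendsto.const_mul hlim (a := K) (Or.inr hKt)
  have hlt : K * ∫⁻ x in closure S, ρ' x ∂μ < ε := lt_of_le_of_lt (by gcongr) hδε
  have hq : 0 < 2 ^ (L + 4) * min 1 (d₀ / 5) := by positivity
  obtain ⟨r, hr1, hr⟩ := (((tendsto_order.1 hlimK).2 ε hlt).and (Ioo_mem_nhdsGT hq)).exists
  set d := r / 2 ^ (L + 4) with hdef
  have hp : (0 : ℝ) < 2 ^ (L + 4) := by positivity
  have hrd : 2 ^ (L + 4) * d = r := by rw [hdef]; field_simp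
  have hd : 0 < d := div_pos hr.1 hp
  have hdm : d < min 1 (d₀ / 5) := by
    rw [hdef, div_lt_iff₀ hp, mul_comm]; exact hr.2
  have hdA := hdm.trans_le (min_le_left _ _)
  have hdB := hdm.trans_le (min_le_right _ _)
  have hfin := p2_cost G (v := fun x => 1 - clamp (2 * (w x - 0))) (v₀ := fun x => 1 - clamp (2 * (w₀ x - 0)))
    (fun x => ⟨by linarith [clamp_le_one (2 * (w x - 0))], by linarith [clamp_nonneg (2 * (w x - 0))]⟩)
    (measurable_const.sub (clamp_measurable.comp ((hw₀.sub_const 0).const_mul 2))) hug2 hZ hZ0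
    (fun x hx => by simp only [hZw x hx]) hE ?_ hSne (fun s hs => ?_) hS hd hdA.le (by linarith)
  · refine hfin.mono le_rfl ?_
    rw [hrd]; exact hr1.le
  · have hZae : ∀ᵐ x ∂μ, x ∉ Z := measure_eq_zero_iff_ae_notMem.1 hZ0
    filter_upwards [hZae] with x hx hxE
    have hxE : 1 / 2 < w₀ x := hxE
    rw [hZw x hx, clamp_of_one_le (by linarith), sub_self]
  · simp only [hS0 s hs]
    rw [clamp_of_nonpos (by norm_num), sub_zero]


theorem smallW {μ : Measure X} {C P : ℝ≥0∞} {L : ℕ} (G : Geo μ C P L) [ProperSpace X] {w : X → ℝ}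
    {ρ : X → ℝ≥0∞} (hρ : LowerSemicontinuous ρ) (hρi : ∫⁻ x, ρ x ∂μ ≠ ∞)
    (hw : ∀ x, 0 ≤ w x ∧ w x ≤ 1) (hug : IsUpperGradient w ρ) {A : Set X} (hA : ∀ x ∈ A, w x = 1)
    {k : ℝ≥0∞} (hk : 1 ≤ k) (hkt : k ≠ ∞) :
    Small μ {x | w x = 0 ∧ ∃ᶠ r in 𝓝[>] (0 : ℝ), μ (ball x r) ≤ k * μ (ball x r ∩ A)} := by
  obtain ⟨w₀, hw₀, hae⟩ := aemeas_of_ug G hρ hρi hw hug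
  set Z := toMeasurable μ {x | w x ≠ w₀ x} with hZdef
  have hZ : MeasurableSet Z := measurableSet_toMeasurable _ _
  have hZ0 : μ Z = 0 := by rw [hZdef, measure_toMeasurable]; exact hae
  have hZw : ∀ x ∉ Z, w x = w₀ x := by
    intro x hx
    by_contra h
    exact hx (subset_toMeasurable _ _ h)
  set N := {x | w x = 0 ∧ ∃ᶠ r in 𝓝[>] (0 : ℝ), μ (ball x r) ≤ k * μ (ball x r ∩ A)} with hN
  set E := {y | w₀ y ≤ 1 / 2} with hE
  have hEm : MeasurableSet E := measurableSet_le hw₀ measurable_const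
  have hk0 : k ≠ 0 := (zero_lt_one.trans_le hk).ne'
  have hN0 : μ N = 0 := by
    rw [measure_eq_zero_iff_ae_notMem]
    have hZae : ∀ᵐ x ∂μ, x ∉ Z := measure_eq_zero_iff_ae_notMem.1 hZ0
    filter_upwards [dens_open G hEm, hZae] with x hx hxZ hxN
    have hxE : x ∈ E := by
      show w₀ x ≤ 1 / 2
      rw [← hZw x hxZ, hxN.1]; norm_num
    have h1 := hx hxE (2 * k)⁻¹ (by simp; finiteness)
    obtain ⟨r, ⟨hr1, hr2⟩, hr⟩ := ((hxN.2.and_eventually h1).and_eventually self_mem_nhdsWithin).exists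
    have h2 : μ (ball x r ∩ A) ≤ μ (ball x r \ E) := by
      calc μ (ball x r ∩ A) ≤ μ ((ball x r \ E) ∪ Z) := by
            refine measure_mono fun y hy => ?_
            by_cases hyZ : y ∈ Z
            · exact Or.inr hyZ
            · refine Or.inl ⟨hy.1, fun h => ?_⟩
              have h : w₀ y ≤ 1 / 2 := h
              rw [← hZw y hyZ, hA y hy.2] at h
              norm_num at h
        _ ≤ μ (ball x r \ E) + μ Z := measure_union_le _ _
        _ = _ := by rw [hZ0, add_zero]
    have h3 : 2 * μ (ball x r) ≤ μ (ball x r) := by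
      calc 2 * μ (ball x r) ≤ 2 * (k * ((2 * k)⁻¹ * μ (ball x r))) := by
            refine mul_le_mul' le_rfl (hr1.trans (mul_le_mul' le_rfl (h2.trans hr2)))
        _ = (2 * k * (2 * k)⁻¹) * μ (ball x r) := by ring
        _ = _ := by
            rw [ENNReal.mul_inv_cancel (by simp [hk0]) (by finiteness), one_mul]
    rw [two_mul] at h3
    exact absurd h3 (not_le.2 (ENNReal.lt_add_right (G.fin _ _) (G.pos _ _ hr)))
  set Na := {x ∈ N | ∃ᶠ r in 𝓝[>] (0 : ℝ), μ (ball x r) ≤ 2 * μ (ball x r ∩ E)} with hNa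
  set Nb : ℕ → Set X := fun m => {x ∈ N | ∀ r, 0 < r → r < 1 / ((m : ℝ) + 1) →
    μ (ball x r) ≤ 2 * μ (ball x r ∩ {y | 1 / 2 < w₀ y})} with hNb
  have ha : Small μ Na := part1 G hw₀ hρi hug hZ hZ0 hZw hA hk hkt
    (measure_mono_null (fun x hx => hx.1) hN0) (fun x hx => hx.1.2) (fun x hx => hx.2)
  have hb : ∀ m, Small μ (Nb m) := fun m => part2 G hw₀ hρi hug hZ hZ0 hZw (fun x hx => hx.1.1)
    (d₀ := 1 / ((m : ℝ) + 1)) (by positivity) (fun x hx => hx.2)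
  refine (ha.union (Small.iUnion hb)).mono fun x hx => ?_
  by_cases hf : ∃ᶠ r in 𝓝[>] (0 : ℝ), μ (ball x r) ≤ 2 * μ (ball x r ∩ E)
  · exact Or.inl ⟨hx, hf⟩
  · right
    rw [not_frequently] at hf
    obtain ⟨d, hd, hd2⟩ := mem_nhdsGT_iff_exists_Ioo_subset.1 hf
    obtain ⟨m, hm⟩ := exists_nat_one_div_lt (show (0 : ℝ) < d from hd)
    refine mem_iUnion.2 ⟨m, hx, fun r hr hrm => ?_⟩
    have h1 : ¬ μ (ball x r) ≤ 2 * μ (ball x r ∩ E) := hd2 ⟨hr, hrm.trans hm⟩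
    push Not at h1
    have e := measure_inter_add_sdiff (μ := μ) (ball x r) hEm
    have e2 : ball x r \ E = ball x r ∩ {y | 1 / 2 < w₀ y} := by
      ext y; simp [hE]
    rw [← e2]
    have h5 : μ (ball x r) + μ (ball x r) ≤ μ (ball x r) + 2 * μ (ball x r \ E) := by
      calc _ = 2 * (μ (ball x r ∩ E) + μ (ball x r \ E)) := by rw [e, two_mul]
        _ = 2 * μ (ball x r ∩ E) + 2 * μ (ball x r \ E) := by ring
        _ ≤ _ := by gcongr
    exact (ENNReal.add_le_add_iff_left (G.fin _ _)).1 h5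

/-- an integrable 1-weak upper gradient can be replaced by an honest lower semicontinuous one -/
theorem strong_ug {μ : Measure X} [SigmaFinite μ] {C P : ℝ≥0∞} {L : ℕ} (G : Geo μ C P L)
    [ProperSpace X] {u : X → ℝ} {g : X → ℝ≥0∞}
    (h : IsWeakUpperGradientOn μ u g univ) (hg : ∫⁻ x, g x ∂μ ≠ ∞) :
    ∃ ρ : X → ℝ≥0∞, LowerSemicontinuous ρ ∧ ∫⁻ x, ρ x ∂μ ≠ ∞ ∧ IsUpperGradient u ρ := by
  have := G.locfin
  obtain ⟨hgm, ρ0, hρ0, hρ0i, hρ0γ⟩ := h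
  set Z := toMeasurable μ {x | g x ≠ hgm.mk g x} with hZdef
  have hZ : MeasurableSet Z := measurableSet_toMeasurable _ _
  have hZ0 : μ Z = 0 := by rw [hZdef, measure_toMeasurable]; exact hgm.ae_eq_mk
  set f : X → ℝ≥0∞ := fun x => hgm.mk g x + Z.indicator (fun _ => ∞) x + ρ0 x with hf
  have m1 : Measurable fun x => hgm.mk g x + Z.indicator (fun _ => ∞) x :=
    hgm.measurable_mk.add (measurable_const.indicator hZ)
  have hfm : Measurable f := m1.add hρ0
  have hgf : ∀ x, g x ≤ f x := by
    intro x
    by_cases hx : x ∈ Z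
    · simp [hf, hx]
    · have : g x = hgm.mk g x := by
        by_contra h
        exact hx (subset_toMeasurable _ _ h)
      rw [this]
      exact le_self_add.trans le_self_add
  have hfi : ∫⁻ x, f x ∂μ ≠ ∞ := by
    rw [hf, lintegral_add_left m1, lintegral_add_left hgm.measurable_mk, lintegral_indicator hZ,
      setLIntegral_measure_zero _ _ hZ0, lintegral_congr_ae hgm.ae_eq_mk.symm]
    have := hρ0i.ne
    finiteness
  obtain ⟨ρ, h1, h2, h3⟩ := exists_le_lowerSemicontinuous_lintegral_ge μ f hfm one_ne_zero
  refine ⟨ρ, h2, ?_, h2.measurable, fun γ => ?_⟩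
  · refine ne_top_of_le_ne_top ?_ h3
    finiteness
  · by_cases hγ : UGIneq u g γ
    · exact le_trans hγ (lintegral_mono fun t => (hgf _).trans (h1 _))
    · have : γ.integral ρ0 = ∞ := hρ0γ γ ⟨fun t _ => mem_univ _, hγ⟩
      have h4 : γ.integral ρ = ∞ := by
        rw [eq_top_iff, ← this]
        refine lintegral_mono fun t => le_trans ?_ (h1 _)
        rw [hf]; exact le_add_self
      unfold UGIneq
      rw [h4]; exact le_top

theorem smallN {μ : Measure X} {C P : ℝ≥0∞} {L : ℕ} (G : Geo μ C P L) [ProperSpace X] {u : X → ℝ}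
    {ρ : X → ℝ≥0∞} (hρ : LowerSemicontinuous ρ) (hρi : ∫⁻ x, ρ x ∂μ ≠ ∞) (hug : IsUpperGradient u ρ)
    {A : Set X} (hA : ∀ x ∈ A, 1 ≤ u x) :
    Small μ {x | |u x| < 1 ∧ ∃ k : ℕ, ∃ᶠ r in 𝓝[>] (0 : ℝ), μ (ball x r) ≤ ((k : ℝ≥0∞) + 1) * μ (ball x r ∩ A)} := by
  have key : ∀ n k : ℕ, Small μ {x | clamp (((n : ℝ) + 1) * (|u x| - (1 - 1 / ((n : ℝ) + 1)))) = 0 ∧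
      ∃ᶠ r in 𝓝[>] (0 : ℝ), μ (ball x r) ≤ ((k : ℝ≥0∞) + 1) * μ (ball x r ∩ A)} := by
    intro n k
    have hn : (0 : ℝ) < (n : ℝ) + 1 := by positivity
    have hu2 := hug.abs.comp (φ := fun a => clamp (((n : ℝ) + 1) * (a - (1 - 1 / ((n : ℝ) + 1))))) hn.le
      (fun a b => by
        refine (clamp_lip _ _).trans ?_
        rw [← mul_sub, abs_mul, abs_of_pos hn]
        have e : a - (1 - 1 / ((n : ℝ) + 1)) - (b - (1 - 1 / ((n : ℝ) + 1))) = a - b := by ring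
        rw [e])
    refine smallW G (ρ := fun x => ENNReal.ofReal ((n : ℝ) + 1) * ρ x) ?_ ?_
      (fun x => ⟨clamp_nonneg _, clamp_le_one _⟩) hu2 (fun x hx => ?_) le_add_self (by finiteness)
    · refine (ENNReal.continuous_const_mul ENNReal.ofReal_ne_top).comp_lowerSemicontinuous hρ ?_
      intro a b hab
      exact mul_le_mul' le_rfl hab
    · rw [lintegral_const_mul' _ _ ENNReal.ofReal_ne_top]
      finiteness
    · apply clamp_of_one_le
      have h1 : 1 ≤ |u x| := (hA x hx).trans (le_abs_self _)
      have h2 : ((n : ℝ) + 1) * (1 / ((n : ℝ) + 1)) = 1 := by field_simp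
      nlinarith
  refine (Small.iUnion fun n => Small.iUnion fun k => key n k).mono ?_
  rintro x ⟨hx, k, hk⟩
  obtain ⟨n, hn⟩ := exists_nat_one_div_lt (sub_pos.2 hx)
  refine mem_iUnion.2 ⟨n, mem_iUnion.2 ⟨k, clamp_of_nonpos ?_, hk⟩⟩
  exact mul_nonpos_of_nonneg_of_nonpos (by positivity) (by linarith)

theorem dens_pos {μ : Measure X} {C P : ℝ≥0∞} {L : ℕ} (G : Geo μ C P L) {A : Set X} {x : X}
    (hx : x ∈ mInterior μ A ∪ mBoundary μ A) :
    ∃ k : ℕ, ∃ᶠ r in 𝓝[>] (0 : ℝ), μ (ball x r) ≤ ((k : ℝ≥0∞) + 1) * μ (ball x r ∩ A) := by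
  rcases hx with hx | hx
  · refine ⟨1, Eventually.frequently ?_⟩
    have h1 : ∀ᶠ r in 𝓝[>] (0 : ℝ), μ (ball x r \ A) / μ (ball x r) < 2⁻¹ :=
      (tendsto_order.1 hx).2 _ (by simp)
    filter_upwards [h1, self_mem_nhdsWithin] with r hr hr0
    have hr0 : 0 < r := hr0
    rw [ENNReal.div_lt_iff (Or.inl (G.pos x r hr0)) (Or.inl (G.fin x r))] at hr
    have h2 : μ (ball x r) ≤ μ (ball x r ∩ A) + μ (ball x r \ A) := measure_le_inter_add_sdiff _ _ _
    have h3 : μ (ball x r) + μ (ball x r) ≤ μ (ball x r) + 2 * μ (ball x r ∩ A) := by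
      calc μ (ball x r) + μ (ball x r) = 2 * μ (ball x r) := (two_mul _).symm
        _ ≤ 2 * (μ (ball x r ∩ A) + 2⁻¹ * μ (ball x r)) :=
            mul_le_mul' le_rfl (h2.trans (add_le_add le_rfl hr.le))
        _ = 2 * 2⁻¹ * μ (ball x r) + 2 * μ (ball x r ∩ A) := by ring
        _ = _ := by rw [ENNReal.mul_inv_cancel (by simp) (by simp), one_mul]
    have := (ENNReal.add_le_add_iff_left (G.fin _ _)).1 h3
    refine this.trans (le_of_eq ?_)
    norm_num
  · obtain ⟨k, hk⟩ := ENNReal.exists_inv_nat_lt hx.1.ne'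
    refine ⟨k, ?_⟩
    have h1 := frequently_lt_of_lt_limsup (by isBoundedDefault) hk
    refine (h1.and_eventually self_mem_nhdsWithin).mono fun r hr => ?_
    have hr0 : 0 < r := hr.2
    have h2 := hr.1
    rw [ENNReal.lt_div_iff_mul_lt (Or.inl (G.pos x r hr0)) (Or.inl (G.fin x r))] at h2
    have h3 : (k : ℝ≥0∞)⁻¹ * μ (ball x r) ≤ μ (ball x r ∩ A) := h2.le
    calc μ (ball x r) ≤ (((k : ℝ≥0∞) + 1) * (k : ℝ≥0∞)⁻¹) * μ (ball x r) := by
          refine le_mul_of_one_le_left' ?_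
          by_cases hk0 : k = 0
          · simp [hk0]
          · calc (1 : ℝ≥0∞) = k * (k : ℝ≥0∞)⁻¹ :=
                  (ENNReal.mul_inv_cancel (by simpa using hk0) (by simp)).symm
              _ ≤ _ := by gcongr; exact le_self_add
      _ = ((k : ℝ≥0∞) + 1) * ((k : ℝ≥0∞)⁻¹ * μ (ball x r)) := by ring
      _ ≤ _ := by gcongr

theorem wug_add {μ : Measure X} {u ψ : X → ℝ} {g gψ : X → ℝ≥0∞} (h : IsWeakUpperGradientOn μ u g univ)
    (hψ : IsUpperGradient ψ gψ) :
    IsWeakUpperGradientOn μ (fun x => |u x| + ψ x) (fun x => g x + gψ x) univ := by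
  obtain ⟨hgm, ρ0, hρ0, hρ0i, hρ0γ⟩ := h
  refine ⟨hgm.add hψ.1.aemeasurable, ρ0, hρ0, hρ0i, fun γ hγ => hρ0γ γ ⟨hγ.1, fun hc => hγ.2 ?_⟩⟩
  unfold UGIneq at hc ⊢
  have e : γ.integral (fun x => g x + gψ x) = γ.integral g + γ.integral gψ := by
    rw [Curve.integral_eq, Curve.integral_eq, Curve.integral_eq]
    exact lintegral_add_right' _ (γ.aemeasurable_comp hψ.1 le_rfl le_rfl)
  rw [e]
  refine le_trans ?_ (add_le_add hc (hψ.2 γ))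
  rw [← ENNReal.ofReal_add (abs_nonneg _) (abs_nonneg _)]
  refine ENNReal.ofReal_le_ofReal ?_
  calc _ = |(|u (γ.toFun 0)| - |u (γ.toFun γ.len)|) + (ψ (γ.toFun 0) - ψ (γ.toFun γ.len))| := by ring_nf
    _ ≤ |(|u (γ.toFun 0)| - |u (γ.toFun γ.len)|)| + |ψ (γ.toFun 0) - ψ (γ.toFun γ.len)| := abs_add_le _ _
    _ ≤ _ := add_le_add (abs_abs_sub_abs_le _ _) le_rfl

theorem main_aux
    (μ : Measure X) (hcomp : CompleteSpace X)
    (hdoub : ∃ Cd : ℝ, Doubling μ Cd) (hpoin : ∃ CP lam : ℝ, Poincare μ CP lam)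
    (A : Set X) :
    capa1 μ (mInterior μ A ∪ mBoundary μ A) ≤ capa1 μ A := by
  obtain ⟨C, P, L, G⟩ := exists_geo μ hdoub hpoin
  have := G.proper
  have := G.locfin
  unfold capa1
  refine le_iInf fun u => le_iInf fun hu => le_iInf fun huA => ?_
  unfold MemN11 at hu
  have hu' := hu
  unfold NNorm at hu'
  rw [ENNReal.add_lt_top] at hu'
  obtain ⟨hu1, hu2⟩ := hu'
  rw [setLIntegral_univ] at hu1
  obtain ⟨g1, hg1⟩ := iInf_lt_iff.1 hu2
  obtain ⟨hg1w, hg1i⟩ := iInf_lt_iff.1 hg1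
  rw [setLIntegral_univ] at hg1i
  obtain ⟨ρ, hρ, hρi, hρu⟩ := strong_ug G hg1w hg1i.ne
  have hsm := smallN G hρ hρi hρu huA
  refine ENNReal.le_of_forall_pos_le_add fun ε hε _ => ?_
  have hε' : (ε : ℝ≥0∞) ≠ 0 := by simpa using hε.ne'
  obtain ⟨ψ, Ψ, gψ, p1, p2, p3, p4, p5, p6⟩ := hsm ε hε'
  set v : X → ℝ := fun x => |u x| + ψ x with hv
  have hv1 : ∀ x ∈ mInterior μ A ∪ mBoundary μ A, 1 ≤ v x := by
    intro x hx
    rcases lt_or_ge (|u x|) 1 with h | h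
    · have := p2 x ⟨h, dens_pos G hx⟩
      simp only [hv]; linarith [abs_nonneg (u x)]
    · simp only [hv]; linarith [(p1 x).1]
  have hint : ∫⁻ x, ENNReal.ofReal |v x| ∂μ ≤ ∫⁻ x, ENNReal.ofReal |u x| ∂μ + ∫⁻ x, Ψ x ∂μ := by
    rw [← lintegral_add_right _ p3]
    refine lintegral_mono fun x => ?_
    simp only [hv]
    rw [abs_of_nonneg (add_nonneg (abs_nonneg _) (p1 x).1), ENNReal.ofReal_add (abs_nonneg _) (p1 x).1]
    exact add_le_add le_rfl (p4 x)
  have hle : NNorm μ univ v ≤ ∫⁻ x, ENNReal.ofReal |u x| ∂μ +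
      (⨅ (g : X → ℝ≥0∞) (_ : IsWeakUpperGradientOn μ u g univ), ∫⁻ x in univ, g x ∂μ) + ε := by
    have h1 : (⨅ (g : X → ℝ≥0∞) (_ : IsWeakUpperGradientOn μ v g univ), ∫⁻ x in univ, g x ∂μ) ≤
        (⨅ (g : X → ℝ≥0∞) (_ : IsWeakUpperGradientOn μ u g univ), ∫⁻ x in univ, g x ∂μ) + ∫⁻ x, gψ x ∂μ := by
      rw [ENNReal.iInf_add]
      refine le_iInf fun g => ?_
      rw [ENNReal.iInf_add]
      refine le_iInf fun hg => ?_
      refine iInf_le_of_le (fun x => g x + gψ x) ?_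
      refine iInf_le_of_le (wug_add hg p5) ?_
      rw [setLIntegral_univ, setLIntegral_univ, lintegral_add_right _ p5.1]
    unfold NNorm
    rw [setLIntegral_univ]
    calc _ ≤ (∫⁻ x, ENNReal.ofReal |u x| ∂μ + ∫⁻ x, Ψ x ∂μ) + ((⨅ (g : X → ℝ≥0∞)
          (_ : IsWeakUpperGradientOn μ u g univ), ∫⁻ x in univ, g x ∂μ) + ∫⁻ x, gψ x ∂μ) :=
          add_le_add hint h1
      _ = ∫⁻ x, ENNReal.ofReal |u x| ∂μ + (⨅ (g : X → ℝ≥0∞)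
          (_ : IsWeakUpperGradientOn μ u g univ), ∫⁻ x in univ, g x ∂μ) +
          (∫⁻ x, Ψ x ∂μ + ∫⁻ x, gψ x ∂μ) := by ring
      _ ≤ _ := by gcongr
  have hmem : MemN11 μ univ v := by
    refine lt_of_le_of_lt hle ?_
    have := hu1.ne
    have := hu2.ne
    finiteness
  refine le_trans ?_ (hle.trans (le_of_eq ?_))
  · exact iInf_le_of_le v (iInf_le_of_le hmem (iInf_le_of_le hv1 le_rfl))
  · unfold NNorm
    rw [setLIntegral_univ]


/-- For any `A ⊆ X`, `capa₁(I_A ∪ ∂*A) ≤ capa₁(A)`, where `I_A` is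
the measure-theoretic interior and `∂*A` the measure-theoretic boundary of `A`. -/
theorem capa_mInterior_union_mBoundary_le
    (μ : Measure X) (hcomp : CompleteSpace X)
    (hdoub : ∃ Cd : ℝ, Doubling μ Cd) (hpoin : ∃ CP lam : ℝ, Poincare μ CP lam)
    (A : Set X) :
    capa1 μ (mInterior μ A ∪ mBoundary μ A) ≤ capa1 μ A := by
  exact main_aux μ hcomp hdoub hpoin A

end PaperBV
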